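/- arXiv:1205.4166 — 5 statements merged into one kernel-verified Lean document; each statement's English description precedes it below -/
import Mathlib

section
/- Let M be a matrix in SL(3,ℤ) whose characteristic polynomial is irreducible over ℚ. Then M is integer conjugate to at least one ς-reduced matrix; that is, there exists a perfect Hessenberg matrix M' integer conjugate to M such that ς(M') ≤ ς(M'') for every perfect Hessenberg matrix M'' integer conjugate to M. -/
/-- 3×3 integer matrices. -/
abbrev M3 : Type := Matrix (Fin 3) (Fin 3) ℤ

/-- Hessenberg complexity ς(M) = a21² · a32. -/
def HessComplexity (M : M3) : ℤ := (M 1 0) ^ 2 * (M 2 1)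

/-- A perfect (upper) Hessenberg matrix: a31 = 0, 0 ≤ a11 < a21, 0 ≤ a12 < a32,
0 ≤ a22 < a32. -/
def IsPerfectHessenberg (M : M3) : Prop :=
  M 2 0 = 0 ∧
  0 ≤ M 0 0 ∧ M 0 0 < M 1 0 ∧
  0 ≤ M 0 1 ∧ M 0 1 < M 2 1 ∧
  0 ≤ M 1 1 ∧ M 1 1 < M 2 1

/-- M₂ = X · M₁ · X⁻¹ for some X ∈ GL(3,ℤ). -/
def IntegerConjugate (M₁ M₂ : M3) : Prop :=
  ∃ X : M3, (X.det = 1 ∨ X.det = -1) ∧ M₂ = X * M₁ * X⁻¹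

/-!
If the characteristic polynomial of `A` is irreducible over `ℚ`, every nonzero vector `v` is cyclic,
that is, the Krylov matrix `K` with columns `v, A v, A² v, …` is nonsingular. Integer row operations
`X` make `X K` upper triangular with positive diagonal. But `X K` is the Krylov matrix of the
conjugate `B = X A X⁻¹` and the vector `X v`, so `B` maps each of its columns to the next one, which
forces `B` to be Hessenberg with positive subdiagonal. Conjugating by unipotent upper triangular
matrices then reduces the columns of `B`, from left to right, modulo their subdiagonal entries.
Perfect matrices have nonnegative complexity, so among those conjugate to `A` one has the least.
-/

open Matrix Polynomial

namespace Hessenberg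

variable {n : ℕ}

section Krylov

variable {R : Type*} [Semiring R]

/-- The Krylov matrix of `A` and `v`, with columns `v, A v, …, A ^ (n - 1) v`. Its determinant is
nonzero exactly when `v` is a cyclic vector for `A`. -/
def krylovMatrix (A : Matrix (Fin n) (Fin n) R) (v : Fin n → R) : Matrix (Fin n) (Fin n) R :=
  of fun i j => (A ^ (j : ℕ) *ᵥ v) i

theorem map_krylovMatrix {S : Type*} [Semiring S] (f : R →+* S) (A : Matrix (Fin n) (Fin n) R)
    (v : Fin n → R) : (krylovMatrix A v).map f = krylovMatrix (A.map f) (f ∘ v) := by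
  ext i j
  simp only [krylovMatrix, map_apply, of_apply, RingHom.map_mulVec, ← Matrix.map_pow]

theorem mul_krylovMatrix_of_semiconjBy {X A B : Matrix (Fin n) (Fin n) R} (h : SemiconjBy X A B)
    (v : Fin n → R) : X * krylovMatrix A v = krylovMatrix B (X *ᵥ v) := by
  ext i j
  calc (X *ᵥ (A ^ (j : ℕ) *ᵥ v)) i = ((X * A ^ (j : ℕ)) *ᵥ v) i := by rw [mulVec_mulVec]
    _ = (B ^ (j : ℕ) *ᵥ (X *ᵥ v)) i := by rw [(h.pow_right j).eq, mulVec_mulVec]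

theorem krylovMatrix_succ (A : Matrix (Fin (n + 1)) (Fin (n + 1)) R) (v : Fin (n + 1) → R)
    (i : Fin (n + 1)) (j : Fin n) :
    krylovMatrix A v i j.succ = ∑ k, A i k * krylovMatrix A v k j.castSucc := by
  simp only [krylovMatrix, of_apply, Fin.val_succ, Fin.val_castSucc, pow_succ', ← mulVec_mulVec]
  rfl

theorem krylovMatrix_mulVec {R : Type*} [CommSemiring R] (A : Matrix (Fin n) (Fin n) R)
    (v w : Fin n → R) :
    krylovMatrix A v *ᵥ w = aeval A (∑ j : Fin n, monomial j (w j)) *ᵥ v := by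
  simp only [map_sum, aeval_monomial, ← Algebra.smul_def, sum_mulVec, smul_mulVec]
  ext i
  simp [krylovMatrix, mulVec_eq_sum, Finset.sum_apply]

end Krylov

section Cyclic

variable {K : Type*} [Field K]

theorem aeval_mulVec_ne_zero {m : Type*} [Fintype m] [DecidableEq m] {A : Matrix m m K}
    (hA : Irreducible A.charpoly) {p : K[X]} (hp : ¬A.charpoly ∣ p) {v : m → K} (hv : v ≠ 0) :
    aeval A p *ᵥ v ≠ 0 := by
  intro h
  obtain ⟨a, b, hab⟩ := (hA.coprime_iff_not_dvd.mpr hp).symm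
  have hinv : aeval A a * aeval A p = 1 := by
    simpa [aeval_self_charpoly] using congrArg (aeval A) hab
  exact hv (by rw [← one_mulVec v, ← hinv, ← mulVec_mulVec, h, mulVec_zero])

theorem det_krylovMatrix_ne_zero {A : Matrix (Fin n) (Fin n) K} (hA : Irreducible A.charpoly)
    {v : Fin n → K} (hv : v ≠ 0) : (krylovMatrix A v).det ≠ 0 := by
  rw [Ne, ← exists_mulVec_eq_zero_iff]
  rintro ⟨w, hw, hzero⟩
  let p := (degreeLTEquiv K n).symm w
  have hp : (p : K[X]) ≠ 0 := by simpa [p] using hw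
  have hdeg : (p : K[X]).degree < A.charpoly.degree := by
    simpa [charpoly_degree_eq_dim] using mem_degreeLT.mp p.2
  rw [krylovMatrix_mulVec] at hzero
  exact aeval_mulVec_ne_zero hA (A.charpoly_monic.not_dvd_of_degree_lt hp hdeg) hv hzero

theorem det_krylovMatrix_ne_zero_of_map {R : Type*} [CommRing R] {f : R →+* K}
    (hf : Function.Injective f) {A : Matrix (Fin n) (Fin n) R}
    (hA : Irreducible (A.charpoly.map f)) {v : Fin n → R} (hv : v ≠ 0) :
    (krylovMatrix A v).det ≠ 0 := by
  have hfv : f ∘ v ≠ 0 := fun h => hv (funext fun i => hf (by simpa using congrFun h i))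
  have hdet := det_krylovMatrix_ne_zero (charpoly_map A f ▸ hA) hfv
  rw [← map_krylovMatrix, ← RingHom.mapMatrix_apply, ← RingHom.map_det] at hdet
  exact fun h => hdet (by rw [h, map_zero])

end Cyclic

section RowOperations

variable {m R : Type*} [Fintype m] [DecidableEq m]

theorem exists_euclidean_row_step [CommRing R] {k i : m} (hki : k ≠ i) (q : R)
    (W : Matrix m m R) : ∃ X : GL m R,
      (∀ l, (X.1 * W) i l = W k l - q * W i l) ∧ (∀ l, (X.1 * W) k l = W i l) ∧
      ∀ r, r ≠ k → r ≠ i → ∀ l, (X.1 * W) r l = W r l := by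
  have hT : IsUnit (transvection k i (-q)) := by
    simp [isUnit_iff_isUnit_det, det_transvection_of_ne k i hki]
  refine ⟨GeneralLinearGroup.swap R k i * hT.unit, fun l => ?_, fun l => ?_, fun r hk hi l => ?_⟩
  · simp [Matrix.mul_assoc, sub_eq_add_neg]
  · simp [Matrix.mul_assoc, hki.symm]
  · simp [Matrix.mul_assoc, swap_mul_of_ne hk hi, hk]

theorem exists_isConj_shear [Ring R] (B : Matrix m m R) {c : m → R} {k : m} (hck : c k = 0) :
    ∃ C, IsConj B C ∧ (∀ i l, l ≠ k → C i l = B i l + c i * B k l) ∧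
      ∀ i, c i = 0 → C i k = B i k - B i ⬝ᵥ c := by
  -- Conjugate by `1 + c eₖᵀ`, whose inverse is `1 - c eₖᵀ` because `eₖᵀ c = 0`.
  let N := vecMulVec c (Pi.single k 1)
  have hN : N * N = 0 := by simp [N, vecMulVec_mul_vecMulVec, hck]
  let U : (Matrix m m R)ˣ := ⟨1 + N, 1 - N, by noncomm_ring [hN], by noncomm_ring [hN]⟩
  have hUB (i l : m) : (U.1 * B) i l = B i l + c i * B k l := by
    simp [U, N, Matrix.add_mul, vecMulVec_mul, vecMulVec_apply]
  have hUBU (i l : m) : (U.1 * B * U⁻¹.1) i l =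
      (U.1 * B) i l - ((U.1 * B) i ⬝ᵥ c) * (Pi.single k 1 : m → R) l := by
    change (U.1 * B * (1 - N)) i l = _
    rw [Matrix.mul_sub, Matrix.mul_one, mul_vecMulVec]
    rfl
  refine ⟨U.1 * B * U⁻¹.1, ⟨U, U.mk_semiconjBy B⟩, fun i l hl => ?_, fun i hci => ?_⟩
  · rw [hUBU, hUB, Pi.single_eq_of_ne hl, mul_zero, sub_zero]
  · have hrow : (U.1 * B) i = B i := funext fun l => by rw [hUB, hci, zero_mul, add_zero]
    rw [hUBU, hrow, Pi.single_eq_same, mul_one]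

end RowOperations

section Triangular

variable {m : Type*} [Fintype m] [LinearOrder m]

/-- The sums, column by column, of the absolute values of the entries below the diagonal, compared
lexicographically from the first column on: the termination measure of triangularization by
Euclidean row operations. -/
def lowerWeight (W : Matrix m m ℤ) : Lex (m → ℕ) :=
  toLex fun k => ∑ i with k < i, (W i k).natAbs

theorem lowerWeight_apply_eq_zero {W : Matrix m m ℤ} {k : m} :
    lowerWeight W k = 0 ↔ ∀ i, k < i → W i k = 0 := by
  simp [lowerWeight]

theorem exists_lowerWeight_mul_lt {W : Matrix m m ℤ} (hW : ¬W.IsUpperTriangular) :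
    ∃ X : GL m ℤ, lowerWeight (X.1 * W) < lowerWeight W := by
  obtain ⟨k, hk⟩ : ∃ k, Minimal (fun k => lowerWeight W k ≠ 0) k := by
    refine exists_minimal_of_wellFoundedLT _ ?_
    contrapose! hW
    exact fun i j hij => lowerWeight_apply_eq_zero.mp (hW j) i hij
  obtain ⟨i, hki, hik⟩ : ∃ i, k < i ∧ W i k ≠ 0 := by
    simpa [lowerWeight_apply_eq_zero] using hk.prop
  have hzero (l : m) (hl : l < k) (r : m) (hr : l < r) : W r l = 0 :=
    lowerWeight_apply_eq_zero.mp (not_not.mp (hk.not_prop_of_lt hl)) r hr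
  -- Rows `k` and `i` vanish in all earlier columns, so the step leaves the weights there at zero.
  obtain ⟨X, hi, hk', hother⟩ := exists_euclidean_row_step hki.ne (W k k / W i k) W
  have hdecr : ((X.1 * W) i k).natAbs < (W i k).natAbs := by
    rw [hi, mul_comm, ← Int.emod_def, ← Nat.cast_lt (α := ℤ),
      Int.natAbs_of_nonneg (Int.emod_nonneg _ hik)]
    exact Int.emod_lt _ hik
  refine ⟨X, k, fun l hl => ?_, ?_⟩
  · rw [not_not.mp (hk.not_prop_of_lt hl), lowerWeight_apply_eq_zero]
    intro r hr
    by_cases hrk : r = k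
    · rw [hrk, hk', hzero l hl i (hl.trans hki)]
    by_cases hri : r = i
    · rw [hri, hi, hzero l hl k hl, hzero l hl i (hl.trans hki), mul_zero, sub_zero]
    rw [hother r hrk hri, hzero l hl r hr]
  · refine Finset.sum_lt_sum (fun r hr => ?_) ⟨i, by simpa using hki, hdecr⟩
    by_cases hri : r = i
    · exact hri ▸ hdecr.le
    · rw [hother r (by simpa using hr : k < r).ne' hri]

theorem exists_isUpperTriangular_mul (V : Matrix m m ℤ) :
    ∃ X : GL m ℤ, (X.1 * V).IsUpperTriangular := by
  let f (X : GL m ℤ) := lowerWeight (X.1 * V)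
  by_contra! h
  obtain ⟨Y, hY⟩ := exists_lowerWeight_mul_lt (h (Function.argmin f))
  refine Function.not_lt_argmin f (Y * Function.argmin f) ?_
  simpa only [f, Units.val_mul, Matrix.mul_assoc] using hY

theorem exists_isUpperTriangular_mul_pos {V : Matrix m m ℤ} (hV : V.det ≠ 0) :
    ∃ X : GL m ℤ, (X.1 * V).IsUpperTriangular ∧ ∀ i, 0 < (X.1 * V) i i := by
  obtain ⟨X, hX⟩ := exists_isUpperTriangular_mul V
  let W := X.1 * V
  have hdet : W.det ≠ 0 := by
    rw [det_mul]
    exact mul_ne_zero ((isUnit_iff_isUnit_det _).mp X.isUnit).ne_zero hV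
  have hdiag (i : m) : W i i ≠ 0 := by
    rw [det_of_isUpperTriangular hX] at hdet
    exact Finset.prod_ne_zero_iff.mp hdet i (Finset.mem_univ i)
  have hsign : IsUnit (diagonal fun i => (W i i).sign) := by
    rw [isUnit_diagonal, Pi.isUnit_iff]
    exact fun i => Int.isUnit_iff_natAbs_eq.mpr (Int.natAbs_sign_of_ne_zero (hdiag i))
  have happly (i j : m) : ((hsign.unit * X).1 * V) i j = (W i i).sign * W i j := by
    rw [Units.val_mul, Matrix.mul_assoc, IsUnit.unit_spec, diagonal_mul]
  refine ⟨hsign.unit * X, fun i j hij => ?_, fun i => ?_⟩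
  · rw [happly, show W i j = 0 from hX hij, mul_zero]
  · rw [happly, Int.sign_mul_self_eq_abs]
    exact abs_pos.mpr (hdiag i)

end Triangular

section Hessenberg

variable {R : Type*}

/-- Upper Hessenberg matrices: all entries below the first subdiagonal vanish. The subdiagonal
entry of column `j.castSucc` lies in row `j.succ`. -/
def IsHessenberg [Zero R] (A : Matrix (Fin (n + 1)) (Fin (n + 1)) R) : Prop :=
  ∀ i (j : Fin n), j.succ < i → A i j.castSucc = 0

theorem IsHessenberg.dotProduct_eq_zero [NonUnitalNonAssocSemiring R]
    {A : Matrix (Fin (n + 1)) (Fin (n + 1)) R} (hA : IsHessenberg A) {j : Fin n}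
    {c : Fin (n + 1) → R} (hc : ∀ l, j.castSucc < l → c l = 0) {i : Fin (n + 1)}
    (hij : j.succ < i) : A i ⬝ᵥ c = 0 := by
  refine Finset.sum_eq_zero fun l _ => ?_
  rcases le_or_gt l j.castSucc with hl | hl
  · obtain ⟨l, rfl⟩ := Fin.exists_castSucc_eq.mpr (hl.trans_lt j.castSucc_lt_last).ne
    have hli : l.succ < i := (Fin.succ_le_succ_iff.mpr (by simpa using hl)).trans_lt hij
    rw [hA i l hli, zero_mul]
  · rw [hc l hl, mul_zero]

section OfKrylov

variable [Semiring R] [NoZeroDivisors R] {A : Matrix (Fin (n + 1)) (Fin (n + 1)) R}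
  {v : Fin (n + 1) → R}

theorem apply_mul_krylovMatrix_diag (hK : (krylovMatrix A v).IsUpperTriangular)
    (hdiag : ∀ i, krylovMatrix A v i i ≠ 0) {i : Fin (n + 1)} {j : Fin n} (hij : j.castSucc < i) :
    A i j.castSucc * krylovMatrix A v j.castSucc j.castSucc = krylovMatrix A v i j.succ := by
  induction j using WellFoundedLT.induction with | _ j ih =>
  rw [krylovMatrix_succ, Finset.sum_eq_single j.castSucc _ (by simp)]
  intro k _ hkj
  rcases hkj.lt_or_gt with hk | hk
  · obtain ⟨k, rfl⟩ := Fin.exists_castSucc_eq.mpr (hk.trans_le (Fin.le_last _)).ne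
    have hki : k.succ < i := (Fin.succ_le_castSucc_iff.mpr (by simpa using hk)).trans_lt hij
    have hmul := (ih k (by simpa using hk) (k.castSucc_lt_succ.trans hki)).trans (hK hki)
    rw [(mul_eq_zero.mp hmul).resolve_right (hdiag _), zero_mul]
  · rw [show krylovMatrix A v k j.castSucc = 0 from hK hk, mul_zero]

theorem isHessenberg_of_isUpperTriangular_krylovMatrix
    (hK : (krylovMatrix A v).IsUpperTriangular) (hdiag : ∀ i, krylovMatrix A v i i ≠ 0) :
    IsHessenberg A := by
  intro i j hij
  have hmul := apply_mul_krylovMatrix_diag hK hdiag (j.castSucc_lt_succ.trans hij)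
  exact (mul_eq_zero.mp (hmul.trans (hK hij))).resolve_right (hdiag _)

end OfKrylov

end Hessenberg

section Perfect

variable {A B : Matrix (Fin (n + 1)) (Fin (n + 1)) ℤ}

/-- Perfect Hessenberg matrices of arbitrary size: in each column but the last, the entries on and
above the diagonal are nonnegative and smaller than the subdiagonal entry, which is therefore
positive. -/
def IsPerfect (A : Matrix (Fin (n + 1)) (Fin (n + 1)) ℤ) : Prop :=
  IsHessenberg A ∧
    ∀ j : Fin n, ∀ i ≤ j.castSucc, A i j.castSucc ∈ Set.Ico 0 (A j.succ j.castSucc)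

/-- The Hessenberg complexity `ς` in arbitrary size. For a Hessenberg matrix it is the determinant
of the Krylov matrix of the first basis vector, hence the exponents. -/
def complexity (A : Matrix (Fin (n + 1)) (Fin (n + 1)) ℤ) : ℤ :=
  ∏ j : Fin n, A j.succ j.castSucc ^ (n - j : ℕ)

theorem IsPerfect.complexity_nonneg (hA : IsPerfect A) : 0 ≤ complexity A :=
  Finset.prod_nonneg fun j _ => pow_nonneg ((hA.2 j _ le_rfl).1.trans (hA.2 j _ le_rfl).2.le) _

theorem exists_isConj_isHessenberg {v : Fin (n + 1) → ℤ} (hv : (krylovMatrix A v).det ≠ 0) :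
    ∃ B, IsConj A B ∧ IsHessenberg B ∧ ∀ j : Fin n, 0 < B j.succ j.castSucc := by
  obtain ⟨X, hX, hpos⟩ := exists_isUpperTriangular_mul_pos hv
  let B := X.1 * A * X⁻¹.1
  have hconj : SemiconjBy X.1 A B := X.mk_semiconjBy A
  rw [mul_krylovMatrix_of_semiconjBy hconj] at hX hpos
  have hdiag := fun i => (hpos i).ne'
  refine ⟨B, ⟨X, hconj⟩, isHessenberg_of_isUpperTriangular_krylovMatrix hX hdiag, fun j => ?_⟩
  refine pos_of_mul_pos_left ?_ (hpos j.castSucc).le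
  rw [apply_mul_krylovMatrix_diag hX hdiag j.castSucc_lt_succ]
  exact hpos j.succ

theorem IsHessenberg.exists_isConj_column_emod (hB : IsHessenberg B) (j : Fin n) :
    ∃ C, IsConj B C ∧
      (∀ i (k : Fin n), k < j ∨ k.castSucc < i → C i k.castSucc = B i k.castSucc) ∧
      ∀ i ≤ j.castSucc, C i j.castSucc = B i j.castSucc % B j.succ j.castSucc := by
  let c (i : Fin (n + 1)) : ℤ :=
    if i ≤ j.castSucc then -(B i j.castSucc / B j.succ j.castSucc) else 0
  have hc (i : Fin (n + 1)) (hi : j.castSucc < i) : c i = 0 := if_neg hi.not_ge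
  obtain ⟨C, hconj, hne, hcol⟩ := exists_isConj_shear B (hc _ j.castSucc_lt_succ)
  refine ⟨C, hconj, fun i k hik => ?_, fun i hi => ?_⟩
  · rcases le_or_gt i j.castSucc with hi | hi
    · have hkj : k < j := hik.elim id fun hki => by simpa using hki.trans_le hi
      have hne' : k.castSucc ≠ j.succ := (Fin.castSucc_lt_succ_iff.mpr hkj.le).ne
      rw [hne i _ hne', hB _ k (Fin.succ_lt_succ_iff.mpr hkj), mul_zero, add_zero]
    · rcases eq_or_ne k.castSucc j.succ with hkj | hkj
      · have hjk : j < k := Fin.succ_le_castSucc_iff.mp hkj.ge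
        have hki : j.succ < i := hkj ▸ hik.resolve_left hjk.not_gt
        rw [hkj, hcol i (hc i hi), hB.dotProduct_eq_zero hc hki, sub_zero]
      · rw [hne i _ hkj, hc i hi, zero_mul, add_zero]
  · rw [hne i _ j.castSucc_lt_succ.ne, Int.emod_def]
    simp only [c, if_pos hi]
    ring

theorem IsHessenberg.exists_isConj_isPerfect (hB : IsHessenberg B)
    (hpos : ∀ j : Fin n, 0 < B j.succ j.castSucc) :
    ∃ C, IsConj B C ∧ IsPerfect C := by
  have hreduce (s : Fin (n + 1)) : ∃ C, IsConj B C ∧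
      (∀ i (k : Fin n), k.castSucc < i → C i k.castSucc = B i k.castSucc) ∧
      ∀ k : Fin n, k.castSucc < s → ∀ i ≤ k.castSucc,
        C i k.castSucc ∈ Set.Ico 0 (B k.succ k.castSucc) := by
    induction s using Fin.induction with
    | zero => exact ⟨B, .refl B, fun _ _ _ => rfl, fun _ h => absurd h (Fin.not_lt_zero _)⟩
    | succ j ih =>
      obtain ⟨C, hBC, hlower, hcols⟩ := ih
      have hC : IsHessenberg C := fun i k hik => by
        rw [hlower i k (k.castSucc_lt_succ.trans hik), hB i k hik]
      obtain ⟨D, hCD, hsame, hmod⟩ := hC.exists_isConj_column_emod j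
      refine ⟨D, hBC.trans hCD, fun i k hik => (hsame i k (.inr hik)).trans (hlower i k hik),
        fun k hk i hi => ?_⟩
      rcases (Fin.castSucc_lt_succ_iff.mp hk).lt_or_eq with hkj | rfl
      · rw [hsame i k (.inl hkj)]
        exact hcols k (Fin.castSucc_lt_castSucc_iff.mpr hkj) i hi
      · rw [hmod i hi, hlower _ _ k.castSucc_lt_succ]
        exact ⟨Int.emod_nonneg _ (hpos k).ne', Int.emod_lt_of_pos _ (hpos k)⟩
  obtain ⟨C, hBC, hlower, hcols⟩ := hreduce (Fin.last n)
  refine ⟨C, hBC, fun i k hik => ?_, fun k i hi => ?_⟩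
  · rw [hlower i k (k.castSucc_lt_succ.trans hik), hB i k hik]
  · rw [hlower _ _ k.castSucc_lt_succ]
    exact hcols k k.castSucc_lt_last i hi

end Perfect

end Hessenberg

open Hessenberg

theorem integerConjugate_iff_isConj {M N : M3} : IntegerConjugate M N ↔ IsConj M N := by
  constructor
  · rintro ⟨X, hX, rfl⟩
    have hX' := (isUnit_iff_isUnit_det X).mpr (Int.isUnit_iff.mpr hX)
    exact ⟨hX'.unit, by simpa using! hX'.unit.mk_semiconjBy M⟩
  · rintro ⟨X, hX⟩
    refine ⟨X, Int.isUnit_iff.mp ((isUnit_iff_isUnit_det _).mp X.isUnit), ?_⟩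
    rw [hX.eq, Matrix.mul_assoc, mul_nonsing_inv _ ((isUnit_iff_isUnit_det _).mp X.isUnit),
      Matrix.mul_one]

theorem isPerfectHessenberg_iff_isPerfect {M : M3} : IsPerfectHessenberg M ↔ IsPerfect M := by
  constructor
  · rintro ⟨h20, h00, h00', h01, h01', h11, h11'⟩
    refine ⟨fun i j hij => ?_, fun j i hij => ?_⟩ <;> fin_cases i <;> fin_cases j <;>
      first | exact h20 | exact ⟨h00, h00'⟩ | exact ⟨h01, h01'⟩ | exact ⟨h11, h11'⟩ | simp at hij
  · rintro ⟨hH, hcol⟩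
    obtain ⟨h00, h00'⟩ := hcol 0 0 (by decide)
    obtain ⟨h01, h01'⟩ := hcol 1 0 (by decide)
    obtain ⟨h11, h11'⟩ := hcol 1 1 (by decide)
    exact ⟨hH 2 0 (by decide), h00, h00', h01, h01', h11, h11'⟩

theorem hessComplexity_eq_complexity (M : M3) : HessComplexity M = complexity M := by
  simp [HessComplexity, complexity, Fin.prod_univ_two]

theorem exists_sigma_reduced_representative_general {n : ℕ}
    (A : Matrix (Fin (n + 1)) (Fin (n + 1)) ℤ) {v : Fin (n + 1) → ℤ}
    (hv : (krylovMatrix A v).det ≠ 0) :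
    ∃ A', IsPerfect A' ∧ IsConj A A' ∧
      ∀ A'', IsPerfect A'' → IsConj A A'' → complexity A' ≤ complexity A'' := by
  obtain ⟨B, hAB, hB, hpos⟩ := exists_isConj_isHessenberg hv
  obtain ⟨C, hBC, hC⟩ := hB.exists_isConj_isPerfect hpos
  let IsComplexity (z : ℤ) := ∃ A', IsPerfect A' ∧ IsConj A A' ∧ complexity A' = z
  have hbdd (z : ℤ) : IsComplexity z → 0 ≤ z := by
    rintro ⟨A', hA', -, rfl⟩
    exact hA'.complexity_nonneg
  obtain ⟨_, ⟨A', hA', hAA', rfl⟩, hmin⟩ := Int.exists_least_of_bdd (P := IsComplexity)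
    ⟨0, hbdd⟩ ⟨_, C, hC, hAB.trans hBC, rfl⟩
  exact ⟨A', hA', hAA', fun A'' hA'' hAA'' => hmin _ ⟨A'', hA'', hAA'', rfl⟩⟩

/-- Any SL(3,ℤ)-matrix with characteristic polynomial irreducible over ℚ is
integer conjugate to a ς-reduced perfect Hessenberg matrix. -/
theorem exists_sigma_reduced_representative (M : M3) (hdet : M.det = 1)
    (hirr : Irreducible (M.charpoly.map (Int.castRingHom ℚ))) :
    ∃ M' : M3, M'.det = 1 ∧ IsPerfectHessenberg M' ∧ IntegerConjugate M M' ∧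
      ∀ M'' : M3, M''.det = 1 → IsPerfectHessenberg M'' → IntegerConjugate M M'' →
        HessComplexity M' ≤ HessComplexity M'' := by
  have hcyclic : (krylovMatrix M (Pi.single 0 1)).det ≠ 0 :=
    det_krylovMatrix_ne_zero_of_map Int.cast_injective hirr (by simp)
  obtain ⟨M', hM', hconj, hmin⟩ := exists_sigma_reduced_representative_general M hcyclic
  have hdet' : M.det = M'.det := isConj_iff_eq.mp (detMonoidHom.map_isConj hconj)
  simp only [isPerfectHessenberg_iff_isPerfect, integerConjugate_iff_isConj,
    hessComplexity_eq_complexity]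
  exact ⟨M', hdet' ▸ hdet, hM', hconj, fun M'' _ => hmin M''⟩
end

section
/- (Asymptotic ς-reducibility along rays of direction (−1,0).) Assume 0 ≤ a11 < a21, 0 ≤ a12 < a32, 0 ≤ a22 < a32, and fix integers m, n. Suppose that for every integer t ≥ 0 the matrix H(m−t, n) has characteristic polynomial irreducible over ℚ and has a non-real complex eigenvalue (i.e., the ray {H(m−t,n) : t ∈ ℤ, t ≥ 0} is an NRS-ray). Then there exists T such that for every integer t > T the matrix H(m−t, n) is ς-reduced. -/
/-- A ς-reduced matrix: a perfect Hessenberg SL(3,ℤ)-matrix whose Hessenberg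
complexity is minimal in its integer conjugacy class. -/
def SigmaReduced (M : M3) : Prop :=
  M.det = 1 ∧ IsPerfectHessenberg M ∧
  ∀ M' : M3, M'.det = 1 → IsPerfectHessenberg M' → IntegerConjugate M M' →
    HessComplexity M ≤ HessComplexity M'

/-- The family H(m,n) of matrices of Hessenberg type ⟨a11,a21|a12,a22,a32⟩. -/
def Hmat (a11 a12 a13 a21 a22 a23 a32 a33 m n : ℤ) : M3 :=
  !![a11, a12, a11 * m + a12 * n + a13;
     a21, a22, a21 * m + a22 * n + a23;
     0,   a32, a32 * n + a33]

/-! With `τ = tr M` fixed and `σ = tr (adj M)` large, `X³ - τX² + σX - 1` has a tiny real root `θ`,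
and `M` is conjugate over `ℚ` to multiplication by `θ` on `ℤ[θ]`. Up to a constant,
`v ↦ det (v, Mv, M²v)` is the norm form there, and its value at `v = X⁻¹e₁` is `± ς(XMX⁻¹)` when
`XMX⁻¹` is Hessenberg. The norm is invariant under `θ`, so an element of bounded norm may be
multiplied by a power of `θ` until its real embedding lies in a window `[K θ, K)`; its complex
embeddings are then so small that it has to be a rational integer. Hence every nonzero value of
the form that is not too large is `ς(M) x³` for an integer `x`, so `ς(M)` is the least of their
absolute values. -/

open Matrix Filter

namespace SigmaReduction

section Krylov

variable {R : Type*} [CommRing R] {n : ℕ}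

/-- The Krylov matrix, with columns `v, M v, …, Mⁿ⁻¹ v`. For `n = 3` its determinant, as a function
of `v`, is a cubic form invariant under `M` whenever `det M = 1`. -/
def krylov (M : Matrix (Fin n) (Fin n) R) (v : Fin n → R) : Matrix (Fin n) (Fin n) R :=
  of fun i j => (M ^ (j : ℕ) *ᵥ v) i

theorem krylov_mulVec_of_semiconjBy {M M' Y : Matrix (Fin n) (Fin n) R} (h : SemiconjBy Y M' M)
    (v : Fin n → R) : krylov M (Y *ᵥ v) = Y * krylov M' v := by
  ext i j
  change (M ^ (j : ℕ) *ᵥ (Y *ᵥ v)) i = (Y *ᵥ (M' ^ (j : ℕ) *ᵥ v)) i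
  rw [mulVec_mulVec, mulVec_mulVec, (h.pow_right j).eq]

theorem det_krylov_mulVec_of_semiconjBy {M M' Y : Matrix (Fin n) (Fin n) R}
    (h : SemiconjBy Y M' M) (v : Fin n → R) :
    (krylov M (Y *ᵥ v)).det = Y.det * (krylov M' v).det := by
  rw [krylov_mulVec_of_semiconjBy h, det_mul]

theorem det_zpow_eq_one {M : Matrix (Fin n) (Fin n) R} (hM : M.det = 1) (k : ℤ) :
    (M ^ k).det = 1 := by
  cases k <;> simp [zpow_negSucc, det_nonsing_inv, hM]

theorem det_krylov_zpow_mulVec {M : Matrix (Fin n) (Fin n) R} (hM : M.det = 1) (k : ℤ)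
    (v : Fin n → R) : (krylov M (M ^ k *ᵥ v)).det = (krylov M v).det := by
  rw [det_krylov_mulVec_of_semiconjBy (Matrix.Commute.zpow_self M k), det_zpow_eq_one hM, one_mul]

theorem krylov_fin_three (M : Matrix (Fin 3) (Fin 3) R) (v : Fin 3 → R) :
    krylov M v = of fun i => ![v i, (M *ᵥ v) i, (M *ᵥ (M *ᵥ v)) i] := by
  ext i j
  fin_cases j <;> simp [krylov, pow_two]

theorem map_krylov {S : Type*} [CommRing S] (f : R →+* S) (M : Matrix (Fin n) (Fin n) R)
    (v : Fin n → R) : f.mapMatrix (krylov M v) = krylov (f.mapMatrix M) (f ∘ v) := by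
  ext i j
  change f ((M ^ (j : ℕ) *ᵥ v) i) = _
  rw [RingHom.map_mulVec, krylov, of_apply, ← map_pow]
  rfl

end Krylov

theorem apply_zpow_mulVec {ι R K : Type*} [Fintype ι] [DecidableEq ι] [CommRing R] [GroupWithZero K]
    {M : Matrix ι ι R} (hM : IsUnit M.det) {L : (ι → R) → K} {l : K} (hl : l ≠ 0)
    (hL : ∀ v, L (M *ᵥ v) = l * L v) (k : ℤ) (v : ι → R) : L (M ^ k *ᵥ v) = l ^ k * L v := by
  have hLinv (w : ι → R) : L (M⁻¹ *ᵥ w) = l⁻¹ * L w := by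
    rw [eq_inv_mul_iff_mul_eq₀ hl, ← hL, mulVec_mulVec, mul_nonsing_inv _ hM, one_mulVec]
  induction k generalizing v with
  | zero => simp
  | succ k ih =>
    rw [Matrix.zpow_add_one hM, ← mulVec_mulVec, ih, hL, zpow_add_one₀ hl, mul_assoc]
  | pred k ih =>
    rw [Matrix.zpow_sub_one hM, ← mulVec_mulVec, ih, hLinv, zpow_sub_one₀ hl, mul_assoc]

section Companion

variable {R : Type*} [CommRing R]

/-- The companion matrix of `X³ - τX² + σX - δ`: multiplication by `X` modulo this polynomial in the
basis `1, X, X²`. -/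
def companion (τ σ δ : R) : Matrix (Fin 3) (Fin 3) R :=
  !![0, 0, δ; 1, 0, -σ; 0, 1, τ]

/-- The value at `l` of the polynomial with coefficients `u`. -/
def evalCoeffs (l : R) (u : Fin 3 → R) : R :=
  u 0 + u 1 * l + u 2 * l ^ 2

theorem det_companion (τ σ δ : R) : (companion τ σ δ).det = δ := by
  simp [companion, det_fin_three]

theorem map_companion {S : Type*} [CommRing S] (f : R →+* S) (τ σ δ : R) :
    f.mapMatrix (companion τ σ δ) = companion (f τ) (f σ) (f δ) := by
  ext i j
  fin_cases i <;> fin_cases j <;> simp [companion]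

theorem map_companion_mulVec {S : Type*} [CommRing S] (f : R →+* S) (τ σ δ : R) (u : Fin 3 → R) :
    f ∘ (companion τ σ δ *ᵥ u) = companion (f τ) (f σ) (f δ) *ᵥ (f ∘ u) := by
  rw [← map_companion]
  exact funext (f.map_mulVec _ u)

theorem map_det_krylov_companion {S : Type*} [CommRing S] (f : R →+* S) (τ σ δ : R)
    (u : Fin 3 → R) :
    f (krylov (companion τ σ δ) u).det = (krylov (companion (f τ) (f σ) (f δ)) (f ∘ u)).det := by
  rw [f.map_det, map_krylov, map_companion]

theorem evalCoeffs_companion_mulVec {τ σ δ l : R} (hl : l ^ 3 - τ * l ^ 2 + σ * l - δ = 0)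
    (u : Fin 3 → R) : evalCoeffs l (companion τ σ δ *ᵥ u) = l * evalCoeffs l u := by
  simp only [evalCoeffs, companion, mulVec, dotProduct, Fin.sum_univ_three, of_apply, cons_val]
  linear_combination -(u 2) * hl

/-- Modulo the cofactor `X² - bX + r` of the root `l`, the polynomial with coefficients `u` reduces
to `P + QX` with `P = u 0 - r * u 2` and `Q = u 1 + b * u 2`, whose norm is `P² + bPQ + rQ²`. -/
theorem det_krylov_companion_eq_mul (l b r : R) (u : Fin 3 → R) :
    (krylov (companion (l + b) (b * l + r) (l * r)) u).det =
      evalCoeffs l u * ((u 0 - r * u 2) ^ 2 + b * (u 0 - r * u 2) * (u 1 + b * u 2)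
        + r * (u 1 + b * u 2) ^ 2) := by
  simp only [krylov_fin_three, companion, evalCoeffs, det_fin_three, mulVec, dotProduct,
    Fin.sum_univ_three, of_apply, cons_val]
  ring

theorem evalCoeffs_eq_add_mul (l b r : R) (u : Fin 3 → R) :
    evalCoeffs l u = (u 0 - r * u 2) + (u 1 + b * u 2) * l + u 2 * (l ^ 2 - b * l + r) := by
  rw [evalCoeffs]
  ring

end Companion

section WindowEstimates

variable {𝕜 : Type*} [Field 𝕜] [LinearOrder 𝕜] [IsStrictOrderedRing 𝕜]

theorem exists_zpow_mul_mem_Ico [Archimedean 𝕜] {l x K : 𝕜} (hl0 : 0 < l) (hl1 : l < 1)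
    (hx : 0 < x) (hK : 0 < K) :
    ∃ k : ℤ, l ^ k * x ∈ Set.Ico (K * l) K := by
  obtain ⟨k, hlow, hup⟩ := exists_mem_Ico_zpow (div_pos hx (mul_pos hK hl0))
    ((one_lt_inv₀ hl0).mpr hl1)
  have hlk : 0 < l ^ k := zpow_pos hl0 k
  rw [_root_.inv_zpow, le_div_iff₀ (mul_pos hK hl0), inv_mul_le_iff₀ hlk] at hlow
  rw [zpow_add_one₀ (inv_ne_zero hl0.ne'), _root_.inv_zpow, div_lt_iff₀ (mul_pos hK hl0),
    show (l ^ k)⁻¹ * l⁻¹ * (K * l) = (l ^ k)⁻¹ * K by field_simp, lt_inv_mul_iff₀ hlk] at hup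
  exact ⟨k, hlow, hup⟩

theorem sq_add_mul_sq_le_of_sq_le {b r : 𝕜} (hb : b ^ 2 ≤ r) (P R : 𝕜) :
    P ^ 2 + r * R ^ 2 ≤ 2 * (P ^ 2 + b * P * R + r * R ^ 2) := by
  nlinarith [sq_nonneg (P + b * R), mul_le_mul_of_nonneg_right hb (sq_nonneg R)]

theorem abs_lt_div_four_of_window {l r s x q : 𝕜} (hlr : l * r = 1) (hs : 0 < s)
    (hlow : 4 * s * l ≤ |x|) (hxq : |x * q| < s) (hr : 0 < r) : |q| < r / 4 := by
  have h : 4 * s * l * |q| < s :=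
    (mul_le_mul_of_nonneg_right hlow (abs_nonneg q)).trans_lt (abs_mul x q ▸ hxq)
  have h' : 4 * l * |q| < 1 := by
    by_contra! hge
    nlinarith
  nlinarith [mul_lt_mul_of_pos_right h' hr]

theorem eq_zero_of_abs_add_lt {l b r s P R : 𝕜} {D : ℤ} (hl0 : 0 < l) (hl1 : l ≤ 1)
    (hbl : b * l ≤ 1) (hr : 8 * s + 8 ≤ r) (hP : |P| ≤ r / 2) (hR : |R| ≤ 1)
    (hup : |P + R * l + D * (l ^ 2 - b * l + r)| < 4 * s) : D = 0 := by
  by_contra hD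
  have hD1 : (1 : 𝕜) ≤ |(D : 𝕜)| := by exact_mod_cast Int.one_le_abs hD
  have hs : 0 < 4 * s := (abs_nonneg _).trans_lt hup
  have hq : r - 1 ≤ l ^ 2 - b * l + r := by nlinarith
  have hRl : |R * l| ≤ 1 := by
    rw [abs_mul, abs_of_pos hl0]
    exact mul_le_one₀ hR hl0.le hl1
  have hupper : |D * (l ^ 2 - b * l + r)| ≤ 4 * s + r / 2 + 1 := by
    rw [abs_le] at hP hRl ⊢
    rw [abs_lt] at hup
    constructor <;> linarith [hup.1, hup.2, hP.1, hP.2, hRl.1, hRl.2]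
  have hlower : r - 1 ≤ |D * (l ^ 2 - b * l + r)| := by
    rw [abs_mul, abs_of_pos (by linarith : 0 < l ^ 2 - b * l + r)]
    nlinarith
  linarith

theorem coeffs_eq_zero_of_window {l b r s : 𝕜} {u : Fin 3 → ℤ} (hl0 : 0 < l) (hlr : l * r = 1)
    (hb : b ^ 2 ≤ r) (hr : 8 * s + 8 ≤ r)
    (hwin : |evalCoeffs l ((↑) ∘ u)| ∈ Set.Ico (4 * s * l) (4 * s))
    (hN : |(krylov (companion (l + b) (b * l + r) 1) ((↑) ∘ u)).det| < s) : u 1 = 0 ∧ u 2 = 0 := by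
  obtain ⟨hlow, hup⟩ := hwin
  have hs : 0 < s := (abs_nonneg _).trans_lt hN
  have hr0 : 0 < r := by linarith
  have hl1 : l ≤ 1 := by nlinarith
  have hbl : b * l ≤ 1 := by
    refine le_of_sq_le_sq ?_ zero_le_one
    calc (b * l) ^ 2 = b ^ 2 * l ^ 2 := mul_pow ..
      _ ≤ r * l ^ 2 := by gcongr
      _ = l := by linear_combination l * hlr
      _ ≤ 1 ^ 2 := by linarith
  set P : 𝕜 := u 0 - r * u 2 with hP
  set Q : 𝕜 := u 1 + b * u 2 with hQ
  have hquad : P ^ 2 + b * P * Q + r * Q ^ 2 < r / 4 := by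
    rw [← hlr, det_krylov_companion_eq_mul] at hN
    exact (le_abs_self _).trans_lt (abs_lt_div_four_of_window hlr hs hlow hN hr0)
  have hsum : P ^ 2 + r * Q ^ 2 < r / 2 := by linarith [sq_add_mul_sq_le_of_sq_le hb P Q]
  have hP' : |P| ≤ r / 2 := abs_le_of_sq_le_sq (by nlinarith [sq_nonneg Q]) (by linarith)
  have hQ' : Q ^ 2 < 1 := by nlinarith [sq_nonneg P]
  have hu2 : u 2 = 0 := by
    rw [evalCoeffs_eq_add_mul l b r] at hup
    exact eq_zero_of_abs_add_lt hl0 hl1 hbl hr hP' ((sq_le_one_iff_abs_le_one Q).mp hQ'.le) hup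
  have hu1 : u 1 ^ 2 < 1 := by
    rw [hQ, hu2, Int.cast_zero, mul_zero, add_zero] at hQ'
    exact_mod_cast hQ'
  exact ⟨Int.abs_lt_one_iff.mp ((sq_lt_one_iff_abs_lt_one _).mp hu1), hu2⟩

end WindowEstimates

theorem eventually_exists_root_mem_Ioc (τ : ℝ) {ε : ℝ} (hε : 0 < ε) :
    ∀ᶠ σ : ℝ in atTop, ∃ l ∈ Set.Ioc 0 ε, l ^ 3 - τ * l ^ 2 + σ * l - 1 = 0 := by
  filter_upwards [eventually_ge_atTop ((1 + τ * ε ^ 2 - ε ^ 3) / ε)] with σ hσ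
  let f : ℝ → ℝ := fun l => l ^ 3 - τ * l ^ 2 + σ * l - 1
  have hf : ContinuousOn f (Set.Icc 0 ε) := by fun_prop
  have hf0 : f 0 < 0 := by norm_num [f]
  have hfε : 0 ≤ f ε := by
    rw [div_le_iff₀ hε] at hσ
    simp only [f]
    linarith
  exact intermediate_value_Ioc hε.le hf ⟨hf0, hfε⟩

theorem exists_zpow_companion_mulVec_of_root {τ σ : ℤ} {l s : ℝ} (hl0 : 0 < l)
    (hl : l ^ 3 - τ * l ^ 2 + σ * l - 1 = 0) (hτ : (|(τ : ℝ)| + 1) ^ 2 ≤ l⁻¹)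
    (hs : 8 * s + 8 ≤ l⁻¹) {u : Fin 3 → ℤ} (hne : (krylov (companion τ σ 1) u).det ≠ 0)
    (hlt : |((krylov (companion τ σ 1) u).det : ℝ)| < s) :
    ∃ k : ℤ, (companion τ σ 1 ^ k *ᵥ u) 1 = 0 ∧ (companion τ σ 1 ^ k *ᵥ u) 2 = 0 := by
  have hlr : l * l⁻¹ = 1 := mul_inv_cancel₀ hl0.ne'
  have hs0 : 0 < s := (abs_nonneg _).trans_lt hlt
  have hl1 : l < 1 := (one_lt_inv₀ hl0).mp (by linarith)
  obtain ⟨b, hb⟩ : ∃ b, (τ : ℝ) = l + b := ⟨τ - l, by ring⟩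
  have hσ : (σ : ℝ) = b * l + l⁻¹ := by
    field_simp
    rw [hb] at hl
    linear_combination hl
  have hb2 : b ^ 2 ≤ l⁻¹ := by
    refine (sq_le_sq' ?_ ?_).trans hτ <;>
      linarith [neg_abs_le (τ : ℝ), le_abs_self (τ : ℝ)]
  have hcast (w : Fin 3 → ℤ) : ((krylov (companion τ σ 1) w).det : ℝ) =
      (krylov (companion (l + b) (b * l + l⁻¹) 1) ((↑) ∘ w)).det := by
    rw [← hb, ← hσ]
    simpa using map_det_krylov_companion (Int.castRingHom ℝ) τ σ 1 w
  let L : (Fin 3 → ℤ) → ℝ := fun w => evalCoeffs l ((↑) ∘ w)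
  have hL (w : Fin 3 → ℤ) : L (companion τ σ 1 *ᵥ w) = l * L w := by
    rw [← evalCoeffs_companion_mulVec hl]
    refine congrArg (evalCoeffs l) ?_
    simpa using! map_companion_mulVec (Int.castRingHom ℝ) τ σ 1 w
  have hLu : L u ≠ 0 := by
    intro h
    apply hne
    have hdet := hcast u
    rw [← hlr, det_krylov_companion_eq_mul, show evalCoeffs l _ = 0 from h, zero_mul] at hdet
    exact_mod_cast hdet
  obtain ⟨k, hk⟩ := exists_zpow_mul_mem_Ico hl0 hl1 (abs_pos.mpr hLu) (by linarith : 0 < 4 * s)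
  refine ⟨k, coeffs_eq_zero_of_window hl0 hlr hb2 hs ?_ ?_⟩
  · change |L _| ∈ _
    rwa [apply_zpow_mulVec (by simp [det_companion]) hl0.ne' hL, abs_mul,
      abs_of_pos (zpow_pos hl0 k)]
  · rwa [← hcast, det_krylov_zpow_mulVec (det_companion τ σ 1)]

theorem eventually_exists_zpow_companion_mulVec (τ s : ℤ) :
    ∀ᶠ σ : ℤ in atTop, ∀ u : Fin 3 → ℤ, (krylov (companion τ σ 1) u).det ≠ 0 →
      |(krylov (companion τ σ 1) u).det| < s →
        ∃ k : ℤ, (companion τ σ 1 ^ k *ᵥ u) 1 = 0 ∧ (companion τ σ 1 ^ k *ᵥ u) 2 = 0 := by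
  set B : ℝ := (|(τ : ℝ)| + 1) ^ 2 + |8 * (s : ℝ) + 8|
  have hB : 0 < B := by positivity
  filter_upwards [tendsto_intCast_atTop_atTop.eventually
    (eventually_exists_root_mem_Ioc (τ : ℝ) (inv_pos.mpr hB))] with σ ⟨l, hl, hroot⟩ u hne hlt
  have hBl : B ≤ l⁻¹ := (le_inv_comm₀ hl.1 hB).mp hl.2
  exact exists_zpow_companion_mulVec_of_root hl.1 hroot
    ((le_add_of_nonneg_right (abs_nonneg _)).trans hBl)
    ((le_abs_self _).trans ((le_add_of_nonneg_left (sq_nonneg _)).trans hBl)) hne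
    (by exact_mod_cast hlt)

section ToCompanion

variable {R : Type*} [CommRing R] {M : Matrix (Fin 3) (Fin 3) R}

/-- The matrix intertwining a Hessenberg matrix `M` with the companion matrix of its characteristic
polynomial `X³ - τX² + σX - δ`. Its rows are `w (M² - τM + σ)`, `w (M - τ)` and `w = (0, 0, 1)`,
written out for `M 2 0 = 0`; the intertwining relation is then the Cayley–Hamilton theorem. -/
def toCompanion (M : Matrix (Fin 3) (Fin 3) R) : Matrix (Fin 3) (Fin 3) R :=
  !![M 1 0 * M 2 1, -(M 0 0 * M 2 1), M 0 0 * M 1 1 - M 0 1 * M 1 0;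
    0, M 2 1, -(M 0 0 + M 1 1);
    0, 0, 1]

theorem det_toCompanion (M : Matrix (Fin 3) (Fin 3) R) :
    (toCompanion M).det = M 1 0 * M 2 1 ^ 2 := by
  simp only [toCompanion, det_fin_three, of_apply, cons_val]
  ring

theorem semiconjBy_toCompanion (h20 : M 2 0 = 0) :
    SemiconjBy (toCompanion M) M (companion M.trace M.adjugate.trace M.det) := by
  simp only [SemiconjBy, trace_fin_three, adjugate_fin_three, det_fin_three]
  ext i j
  fin_cases i <;> fin_cases j <;>
    simp only [toCompanion, companion, Matrix.mul_apply, Fin.sum_univ_three, of_apply, cons_val,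
      Fin.zero_eta, Fin.mk_one, Fin.reduceFinMk, h20] <;>
    ring

theorem eq_zero_of_toCompanion_mulVec_eq_zero [NoZeroDivisors R] (h32 : M 2 1 ≠ 0) {v : Fin 3 → R}
    (h1 : (toCompanion M *ᵥ v) 1 = 0) (h2 : (toCompanion M *ᵥ v) 2 = 0) : v 1 = 0 ∧ v 2 = 0 := by
  replace h2 : v 2 = 0 := by simpa [toCompanion, mulVec, dotProduct, Fin.sum_univ_three] using h2
  refine ⟨?_, h2⟩
  simpa [toCompanion, mulVec, dotProduct, Fin.sum_univ_three, h2, h32] using h1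

end ToCompanion

section Hessenberg

variable {M : M3}

theorem det_krylov_of_hessenberg (h20 : M 2 0 = 0) {v : Fin 3 → ℤ} (h1 : v 1 = 0) (h2 : v 2 = 0) :
    (krylov M v).det = HessComplexity M * v 0 ^ 3 := by
  simp only [krylov_fin_three, det_fin_three, HessComplexity, mulVec, dotProduct,
    Fin.sum_univ_three, of_apply, cons_val, h20, h1, h2]
  ring

theorem hessComplexity_pos (hM : IsPerfectHessenberg M) : 0 < HessComplexity M := by
  obtain ⟨-, h00, h10, h01, h21, -⟩ := hM
  exact mul_pos (pow_pos (h00.trans_lt h10) 2) (h01.trans_lt h21)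

theorem exists_abs_det_krylov_eq_of_integerConjugate {M' : M3} (h : IntegerConjugate M M')
    (hM' : IsPerfectHessenberg M') : ∃ v, |(krylov M v).det| = HessComplexity M' := by
  obtain ⟨X, hX, rfl⟩ := h
  have hunit : IsUnit X.det := Int.isUnit_iff.mpr hX
  have hconj : SemiconjBy X⁻¹ (X * M * X⁻¹) M := by
    rw [SemiconjBy, Matrix.mul_assoc X, nonsing_inv_mul_cancel_left _ _ hunit]
  have hdet : |X⁻¹.det| = 1 :=
    Int.isUnit_iff_abs_eq.mp (isUnit_nonsing_inv_det _ hunit)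
  refine ⟨X⁻¹ *ᵥ ![1, 0, 0], ?_⟩
  rw [det_krylov_mulVec_of_semiconjBy hconj, abs_mul, hdet, one_mul,
    det_krylov_of_hessenberg hM'.1 rfl rfl]
  simp [abs_of_pos (hessComplexity_pos hM')]

theorem sigmaReduced_of_forall_le_abs_det_krylov (hdet : M.det = 1) (hM : IsPerfectHessenberg M)
    (h : ∀ v, (krylov M v).det ≠ 0 → HessComplexity M ≤ |(krylov M v).det|) :
    SigmaReduced M := by
  refine ⟨hdet, hM, fun M' _ hM' hconj => ?_⟩
  obtain ⟨v, hv⟩ := exists_abs_det_krylov_eq_of_integerConjugate hconj hM'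
  exact hv ▸ h v (abs_pos.mp (hv ▸ hessComplexity_pos hM'))

theorem hessComplexity_le_abs_of_zpow_mulVec (hdet : M.det = 1) (hM : IsPerfectHessenberg M)
    {v : Fin 3 → ℤ} (hv : (krylov M v).det ≠ 0) {k : ℤ} (h1 : (M ^ k *ᵥ v) 1 = 0)
    (h2 : (M ^ k *ᵥ v) 2 = 0) : HessComplexity M ≤ |(krylov M v).det| := by
  rw [← det_krylov_zpow_mulVec hdet k v, det_krylov_of_hessenberg hM.1 h1 h2] at hv ⊢
  rw [abs_mul, abs_of_pos (hessComplexity_pos hM)]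
  exact le_mul_of_one_le_right (hessComplexity_pos hM).le
    (Int.one_le_abs (right_ne_zero_of_mul hv))

theorem eventually_forall_sigmaReduced (τ p : ℤ) :
    ∀ᶠ σ : ℤ in atTop, ∀ M : M3, M.det = 1 → IsPerfectHessenberg M → M.trace = τ →
      M 1 0 * M 2 1 = p → M.adjugate.trace = σ → SigmaReduced M := by
  filter_upwards [eventually_exists_zpow_companion_mulVec τ (p ^ 3)]
  rintro _ h M hdet hM rfl rfl rfl
  refine sigmaReduced_of_forall_le_abs_det_krylov hdet hM fun v hv => ?_
  by_contra! hlt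
  obtain ⟨h20, h00, h10, h01, h21, -⟩ := id hM
  have hpos : 0 < (toCompanion M).det := by
    rw [det_toCompanion]
    exact mul_pos (h00.trans_lt h10) (pow_pos (h01.trans_lt h21) 2)
  have hconj := hdet ▸ semiconjBy_toCompanion h20
  have hform := det_krylov_mulVec_of_semiconjBy hconj v
  have hsmall : |(krylov (companion M.trace M.adjugate.trace 1) (toCompanion M *ᵥ v)).det| <
      (M 1 0 * M 2 1) ^ 3 := by
    calc _ = (toCompanion M).det * |(krylov M v).det| := by
          rw [hform, abs_mul, abs_of_pos hpos]
      _ < (toCompanion M).det * HessComplexity M := by gcongr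
      _ = (M 1 0 * M 2 1) ^ 3 := by
          rw [det_toCompanion, HessComplexity]
          ring
  obtain ⟨k, hk1, hk2⟩ := h _ (hform ▸ mul_ne_zero hpos.ne' hv) hsmall
  have hzpow := (Matrix.SemiconjBy.zpow_right (by simp [hdet]) (by simp [det_companion]) hconj k).eq
  rw [mulVec_mulVec, ← hzpow, ← mulVec_mulVec] at hk1 hk2
  obtain ⟨h1, h2⟩ := eq_zero_of_toCompanion_mulVec_eq_zero (h01.trans_lt h21).ne' hk1 hk2
  exact hlt.not_ge (hessComplexity_le_abs_of_zpow_mulVec hdet hM hv h1 h2)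

end Hessenberg

section Ray

variable (a11 a12 a13 a21 a22 a23 a32 a33 m n : ℤ)

theorem det_Hmat :
    (Hmat a11 a12 a13 a21 a22 a23 a32 a33 m n).det =
      (Hmat a11 a12 a13 a21 a22 a23 a32 a33 0 0).det := by
  simp only [Hmat, det_fin_three, of_apply, cons_val]
  ring

theorem trace_Hmat :
    (Hmat a11 a12 a13 a21 a22 a23 a32 a33 m n).trace = a11 + a22 + (a32 * n + a33) := by
  simp [Hmat, trace_fin_three]

theorem trace_adjugate_Hmat_sub (t : ℤ) :
    (Hmat a11 a12 a13 a21 a22 a23 a32 a33 (m - t) n).adjugate.trace =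
      (Hmat a11 a12 a13 a21 a22 a23 a32 a33 m n).adjugate.trace + a21 * a32 * t := by
  simp only [Hmat, trace_fin_three, adjugate_fin_three, of_apply, cons_val]
  ring

end Ray

end SigmaReduction

open SigmaReduction in
theorem asymptotic_sigma_reducibility_dir_neg_one_zero_general
    (a11 a12 a13 a21 a22 a23 a32 a33 m n : ℤ)
    (hdet : (Hmat a11 a12 a13 a21 a22 a23 a32 a33 0 0).det = 1)
    (h11 : 0 ≤ a11) (h1121 : a11 < a21)
    (h12 : 0 ≤ a12) (h1232 : a12 < a32)
    (h22 : 0 ≤ a22) (h2232 : a22 < a32) :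
    ∃ T : ℤ, ∀ t : ℤ, T < t →
      SigmaReduced (Hmat a11 a12 a13 a21 a22 a23 a32 a33 (m - t) n) := by
  have hσ : Tendsto (fun t => (Hmat a11 a12 a13 a21 a22 a23 a32 a33 (m - t) n).adjugate.trace)
      atTop atTop := by
    simp only [trace_adjugate_Hmat_sub]
    exact tendsto_atTop_add_const_left _ _ (tendsto_id.const_mul_atTop'
      (mul_pos (h11.trans_lt h1121) (h12.trans_lt h1232)))
  obtain ⟨T, hT⟩ := eventually_atTop.mp (hσ.eventually
    (eventually_forall_sigmaReduced (a11 + a22 + (a32 * n + a33)) (a21 * a32)))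
  refine ⟨T, fun t ht => hT t ht.le _ ?_ ?_ ?_ rfl rfl⟩
  · rw [det_Hmat, hdet]
  · exact ⟨rfl, h11, h1121, h12, h1232, h22, h2232⟩
  · exact trace_Hmat ..

/-- Along any NRS-ray of direction (−1,0), all but finitely many matrices are
ς-reduced. -/
theorem asymptotic_sigma_reducibility_dir_neg_one_zero
    (a11 a12 a13 a21 a22 a23 a32 a33 m n : ℤ)
    (hdet : (Hmat a11 a12 a13 a21 a22 a23 a32 a33 0 0).det = 1)
    (h11 : 0 ≤ a11) (h1121 : a11 < a21)
    (h12 : 0 ≤ a12) (h1232 : a12 < a32)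
    (h22 : 0 ≤ a22) (h2232 : a22 < a32)
    (hray : ∀ t : ℤ, 0 ≤ t →
      Irreducible
        ((Hmat a11 a12 a13 a21 a22 a23 a32 a33 (m - t) n).charpoly.map
          (Int.castRingHom ℚ)) ∧
      ∃ z : ℂ, z.im ≠ 0 ∧
        Polynomial.aeval z (Hmat a11 a12 a13 a21 a22 a23 a32 a33 (m - t) n).charpoly = 0) :
    ∃ T : ℤ, ∀ t : ℤ, T < t →
      SigmaReduced (Hmat a11 a12 a13 a21 a22 a23 a32 a33 (m - t) n) := by
  exact asymptotic_sigma_reducibility_dir_neg_one_zero_general a11 a12 a13 a21 a22 a23 a32 a33 m n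
    hdet h11 h1121 h12 h1232 h22 h2232
end

section
/- (Asymptotic ς-reducibility along rays of direction (a11,a21).) Assume 0 ≤ a11 < a21, 0 ≤ a12 < a32, 0 ≤ a22 < a32, and fix integers m, n. Suppose that for every integer t ≥ 0 the matrix H(m+a11·t, n+a21·t) has characteristic polynomial irreducible over ℚ and has a non-real complex eigenvalue (i.e., the ray {H(m+a11·t, n+a21·t) : t ∈ ℤ, t ≥ 0} is an NRS-ray). Then there exists T such that for every integer t > T the matrix H(m+a11·t, n+a21·t) is ς-reduced. -/
/-!
If `M'` is a perfect Hessenberg matrix integer conjugate to `M`, then `ς(M') = |det (v, Mv, M²v)|`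
for some integer vector `v`, so `M` is ς-reduced as soon as no integer `v` gives a nonzero
determinant of absolute value below `ς(M)`.

Along the direction `(a11, a21)` the Hessenberg type, the determinant and the trace of the adjugate
stay fixed while the trace tends to infinity. Hence the characteristic polynomial factors as
`(X - x)(X² - τX + ν)` with `x` large, `ν = 1 / x` and `τ² ≤ ν`. Writing
`v = p(M)e₁` with `p = A + BX + c(X² - τX + ν)` gives
`det (v, Mv, M²v) = ς(M) p(x) (A² + ABτ + B²ν)`, and `p(x) = ℓ(v)` for the left eigenvector `ℓ` of
`M` at `x` with first coordinate `1`.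

Replacing `v` by `Mᵏv` keeps the determinant and multiplies `ℓ(v)` by `xᵏ`. So `|p(x)|` may be
assumed to lie in `[1 / (4D), x / (4D))`, where `D = a21 a32`. If now the determinant is smaller
than `ς(M)`, the lower bound on `|p(x)|` bounds `A` and `B`, then the upper bound forces the last
coordinate `D c` of `v` to vanish, and then its second coordinate `a21 B` as well. Thus `v` is a
multiple `k e₁`, and its determinant `k³ ς(M)` is zero or at least `ς(M)` in absolute value.
-/

open Matrix Polynomial

section Krylov

variable {R S : Type*} [CommRing R] [CommRing S] {n : ℕ}

/-- The Krylov matrix of `v` under `M`: its columns are `v, M v, …, Mⁿ⁻¹ v`. Its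
determinant extends the Hessenberg complexity from `e₁` to arbitrary starting vectors `v`. -/
def krylov (M : Matrix (Fin n) (Fin n) R) (v : Fin n → R) : Matrix (Fin n) (Fin n) R :=
  .of fun i j => (M ^ (j : ℕ) *ᵥ v) i

theorem mul_krylov {X M M' : Matrix (Fin n) (Fin n) R} (h : SemiconjBy X M M') (v : Fin n → R) :
    X * krylov M v = krylov M' (X *ᵥ v) := by
  ext i j
  have hj : X * M ^ (j : ℕ) = M' ^ (j : ℕ) * X := h.pow_right j
  change (X *ᵥ (M ^ (j : ℕ) *ᵥ v)) i = (M' ^ (j : ℕ) *ᵥ (X *ᵥ v)) i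
  rw [mulVec_mulVec, mulVec_mulVec, hj]

theorem det_krylov_mulVec {X M : Matrix (Fin n) (Fin n) R} (h : Commute X M) (v : Fin n → R) :
    (krylov M (X *ᵥ v)).det = X.det * (krylov M v).det := by
  rw [← mul_krylov h, det_mul]

theorem krylov_smul (M : Matrix (Fin n) (Fin n) R) (a : R) (v : Fin n → R) :
    krylov M (a • v) = a • krylov M v := by
  ext i j
  simp [krylov, mulVec_smul]

theorem krylov_map (f : R →+* S) (M : Matrix (Fin n) (Fin n) R) (v : Fin n → R) :
    (krylov M v).map f = krylov (M.map f) (f ∘ v) := by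
  ext i j
  simp [krylov, ← RingHom.map_mulVec, ← Matrix.map_pow]

theorem intCast_det_krylov (M : Matrix (Fin n) (Fin n) ℤ) (v : Fin n → ℤ) :
    ((krylov M v).det : R) =
      (krylov (M.map (Int.castRingHom R)) (Int.castRingHom R ∘ v)).det := by
  rw [← krylov_map, ← RingHom.mapMatrix_apply, ← RingHom.map_det, eq_intCast]

theorem mulVec_single_zero {M : Matrix (Fin 3) (Fin 3) R} (h20 : M 2 0 = 0) :
    M *ᵥ Pi.single 0 1 = ![M 0 0, M 1 0, 0] := by
  rw [mulVec_single_one, ← h20]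
  exact (FinVec.etaExpand_eq (M.col 0)).symm

theorem sq_mulVec_single_zero {M : Matrix (Fin 3) (Fin 3) R} (h20 : M 2 0 = 0) :
    M ^ 2 *ᵥ Pi.single 0 1 =
      ![M 0 0 ^ 2 + M 0 1 * M 1 0, M 1 0 * (M 0 0 + M 1 1), M 1 0 * M 2 1] := by
  rw [sq, ← mulVec_mulVec, mulVec_single_zero h20]
  ext i
  fin_cases i <;> simp [mulVec_eq_sum, Fin.sum_univ_three, h20, sq, add_mul, mul_comm (M 1 0)]

theorem krylov_single_zero {M : Matrix (Fin 3) (Fin 3) R} (h20 : M 2 0 = 0) :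
    krylov M (Pi.single 0 1) =
      !![1, M 0 0, M 0 0 ^ 2 + M 0 1 * M 1 0; 0, M 1 0, M 1 0 * (M 0 0 + M 1 1);
        0, 0, M 1 0 * M 2 1] := by
  ext i j
  fin_cases j
  · fin_cases i <;> simp [krylov]
  · fin_cases i <;> simp [krylov, h20]
  · change (M ^ 2 *ᵥ Pi.single 0 1) i = _
    rw [sq_mulVec_single_zero h20]
    fin_cases i <;> rfl

theorem det_krylov_single_zero {M : Matrix (Fin 3) (Fin 3) R} (h20 : M 2 0 = 0) :
    (krylov M (Pi.single 0 1)).det = M 1 0 ^ 2 * M 2 1 := by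
  simp [krylov_single_zero h20, det_fin_three, sq, mul_assoc]

theorem hessComplexity_eq_det_krylov_single_zero {M : M3} (h20 : M 2 0 = 0) :
    HessComplexity M = (krylov M (Pi.single 0 1)).det :=
  (det_krylov_single_zero h20).symm

theorem IsPerfectHessenberg.hessComplexity_pos {M : M3} (hM : IsPerfectHessenberg M) :
    0 < HessComplexity M := by
  obtain ⟨-, h00, h10, h01, h21, -⟩ := hM
  exact mul_pos (pow_pos (h00.trans_lt h10) 2) (h01.trans_lt h21)

theorem IntegerConjugate.exists_hessComplexity_eq_abs_det_krylov {M M' : M3}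
    (h : IntegerConjugate M M') (hM' : IsPerfectHessenberg M') :
    ∃ v, HessComplexity M' = |(krylov M v).det| := by
  obtain ⟨X, hX, hXM⟩ := h
  have hXu : IsUnit X.det := Int.isUnit_iff.2 hX
  have hsemi : SemiconjBy X M M' := by
    rw [SemiconjBy, hXM, Matrix.mul_assoc _ _ X, nonsing_inv_mul X hXu, Matrix.mul_one]
  have hdet : HessComplexity M' = X.det * (krylov M (X⁻¹ *ᵥ Pi.single 0 1)).det := by
    rw [hessComplexity_eq_det_krylov_single_zero hM'.1, ← det_mul, mul_krylov hsemi, mulVec_mulVec,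
      mul_nonsing_inv X hXu, one_mulVec]
  refine ⟨X⁻¹ *ᵥ Pi.single 0 1, ?_⟩
  rw [← abs_of_pos hM'.hessComplexity_pos, hdet, abs_mul, Int.isUnit_iff_abs_eq.1 hXu, one_mul]

end Krylov

section QuadPoly

variable {R : Type*} [CommRing R]

theorem det_smul_one_add_smul_add_smul_sq (M : Matrix (Fin 3) (Fin 3) R) (a b c : R) :
    (a • 1 + b • M + c • M ^ 2).det =
      a ^ 3 + b ^ 3 * M.det + c ^ 3 * M.det ^ 2
      + a ^ 2 * b * M.trace + a ^ 2 * c * (M.trace ^ 2 - 2 * M.adjugate.trace)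
      + a * b ^ 2 * M.adjugate.trace + b ^ 2 * c * (M.trace * M.det)
      + a * c ^ 2 * (M.adjugate.trace ^ 2 - 2 * M.trace * M.det)
      + b * c ^ 2 * (M.adjugate.trace * M.det)
      + a * b * c * (M.trace * M.adjugate.trace - 3 * M.det) := by
  simp only [det_fin_three, trace_fin_three, adjugate_fin_three, sq, mul_apply, Fin.sum_univ_three,
    Matrix.add_apply, Matrix.smul_apply, smul_eq_mul, Matrix.one_apply, of_apply, cons_val',
    cons_val_zero, cons_val_one, cons_val, if_pos, Fin.reduceEq, if_false]
  ring

/-- The general polynomial of degree at most two, written as `A + B X` plus a multiple of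
`X² - τ X + ν`. The latter will be the quadratic factor of a characteristic polynomial
`(X - x)(X² - τ X + ν)`. -/
noncomputable def quadPoly (τ ν A B c : R) : R[X] :=
  C A + C B * X + C c * (X ^ 2 - C τ * X + C ν)

theorem aeval_quadPoly (M : Matrix (Fin 3) (Fin 3) R) (τ ν A B c : R) :
    aeval M (quadPoly τ ν A B c) = (A + c * ν) • 1 + (B - c * τ) • M + c • M ^ 2 := by
  simp only [quadPoly, map_add, map_mul, map_sub, map_pow, aeval_C, aeval_X,
    Algebra.algebraMap_eq_smul_one, smul_mul_assoc, one_mul]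
  module

theorem eval_quadPoly (x τ ν A B c : R) :
    eval x (quadPoly τ ν A B c) = A + B * x + c * (x ^ 2 - τ * x + ν) := by
  simp [quadPoly]

theorem det_aeval_quadPoly {M : Matrix (Fin 3) (Fin 3) R} {x τ ν : R} (htr : M.trace = x + τ)
    (hadj : M.adjugate.trace = x * τ + ν) (hdet : M.det = x * ν) (A B c : R) :
    (aeval M (quadPoly τ ν A B c)).det =
      (quadPoly τ ν A B c).eval x * (A ^ 2 + A * B * τ + B ^ 2 * ν) := by
  rw [aeval_quadPoly, det_smul_one_add_smul_add_smul_sq, htr, hadj, hdet, eval_quadPoly]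
  ring

theorem aeval_quadPoly_mulVec_single {M : Matrix (Fin 3) (Fin 3) R} (h20 : M 2 0 = 0)
    (τ ν A B c : R) :
    aeval M (quadPoly τ ν A B c) *ᵥ Pi.single 0 1 =
      ![A + M 0 0 * B + c * (M 0 0 ^ 2 + M 0 1 * M 1 0 - τ * M 0 0 + ν),
        M 1 0 * (B + c * (M 0 0 + M 1 1 - τ)), M 1 0 * M 2 1 * c] := by
  have he : (Pi.single 0 1 : Fin 3 → R) = ![1, 0, 0] := (FinVec.etaExpand_eq _).symm
  rw [aeval_quadPoly, add_mulVec, add_mulVec, smul_mulVec, smul_mulVec, smul_mulVec, one_mulVec,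
    mulVec_single_zero h20, sq_mulVec_single_zero h20, he]
  simp only [smul_vec3, vec3_add, smul_eq_mul]
  exact vec3_eq (by ring) (by ring) (by ring)

theorem exists_aeval_quadPoly_mulVec_single {K : Type*} [Field K] {M : Matrix (Fin 3) (Fin 3) K}
    (h20 : M 2 0 = 0) (h10 : M 1 0 ≠ 0) (h21 : M 2 1 ≠ 0) (τ ν : K) (w : Fin 3 → K) :
    ∃ A B c, aeval M (quadPoly τ ν A B c) *ᵥ Pi.single 0 1 = w := by
  let c := w 2 / (M 1 0 * M 2 1)
  let B := w 1 / M 1 0 - c * (M 0 0 + M 1 1 - τ)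
  refine ⟨w 0 - M 0 0 * B - c * (M 0 0 ^ 2 + M 0 1 * M 1 0 - τ * M 0 0 + ν), B, c, ?_⟩
  rw [aeval_quadPoly_mulVec_single h20]
  ext i
  fin_cases i
  · simp [sub_add_cancel, sub_right_comm]
  · simp [B, mul_div_cancel₀, h10]
  · simp [c, mul_div_cancel₀, h10, h21]

theorem det_sub_smul_one_eq_zero {M : Matrix (Fin 3) (Fin 3) R} {x τ ν : R}
    (htr : M.trace = x + τ) (hadj : M.adjugate.trace = x * τ + ν) (hdet : M.det = x * ν) :
    (M - x • 1).det = 0 := by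
  have hsub : M - x • 1 = aeval M (quadPoly τ ν (-x) 1 0) := by
    rw [aeval_quadPoly]
    module
  rw [hsub, det_aeval_quadPoly htr hadj hdet, eval_quadPoly]
  ring

theorem det_krylov_aeval_quadPoly_mulVec_single {M : Matrix (Fin 3) (Fin 3) R} {x τ ν : R}
    (h20 : M 2 0 = 0) (htr : M.trace = x + τ) (hadj : M.adjugate.trace = x * τ + ν)
    (hdet : M.det = x * ν) (A B c : R) :
    (krylov M (aeval M (quadPoly τ ν A B c) *ᵥ Pi.single 0 1)).det =
      M 1 0 ^ 2 * M 2 1 * ((quadPoly τ ν A B c).eval x * (A ^ 2 + A * B * τ + B ^ 2 * ν)) := by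
  have hcomm : Commute (aeval M (quadPoly τ ν A B c)) M := by
    simpa using (Commute.all (quadPoly τ ν A B c) X).map (aeval M)
  rw [det_krylov_mulVec hcomm, det_aeval_quadPoly htr hadj hdet, det_krylov_single_zero h20,
    mul_comm]

end QuadPoly

section Eigenfunctional

theorem vecMul_aeval_of_vecMul_eq_smul {R ι : Type*} [CommRing R] [Fintype ι] [DecidableEq ι]
    {M : Matrix ι ι R} {ℓ : ι → R} {x : R} (h : ℓ ᵥ* M = x • ℓ) (p : R[X]) :
    ℓ ᵥ* aeval M p = p.eval x • ℓ := by
  induction p using Polynomial.induction_on with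
  | C a => simp [Algebra.algebraMap_eq_smul_one, vecMul_smul]
  | add p q hp hq => simp [vecMul_add, hp, hq, add_smul]
  | monomial k a ih =>
    rw [pow_succ, ← mul_assoc, map_mul, aeval_X, ← vecMul_vecMul, ih, smul_vecMul, h, smul_smul]
    simp

theorem det_krylov_eq_zero_of_dotProduct_eq_zero {R : Type*} [CommRing R] [IsDomain R] {n : ℕ}
    {M : Matrix (Fin n) (Fin n) R} {ℓ v : Fin n → R} {x : R} (hℓM : ℓ ᵥ* M = x • ℓ) (hℓ : ℓ ≠ 0)
    (hv : ℓ ⬝ᵥ v = 0) : (krylov M v).det = 0 := by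
  refine exists_vecMul_eq_zero_iff.1 ⟨ℓ, hℓ, funext fun j => ?_⟩
  have hpow : ℓ ᵥ* M ^ (j : ℕ) = x ^ (j : ℕ) • ℓ := by
    simpa using vecMul_aeval_of_vecMul_eq_smul hℓM (X ^ (j : ℕ))
  calc (ℓ ᵥ* krylov M v) j = ℓ ⬝ᵥ (M ^ (j : ℕ) *ᵥ v) := rfl
    _ = 0 := by rw [dotProduct_mulVec, hpow, smul_dotProduct, hv, smul_zero]

theorem exists_vecMul_eq_smul_and_apply_zero_eq_one {K : Type*} [Field K]
    {M : Matrix (Fin 3) (Fin 3) K} (h20 : M 2 0 = 0) (h10 : M 1 0 ≠ 0) (h21 : M 2 1 ≠ 0) {x : K}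
    (hx : (M - x • 1).det = 0) :
    ∃ ℓ : Fin 3 → K, ℓ ᵥ* M = x • ℓ ∧ ℓ 0 = 1 := by
  obtain ⟨ℓ, hℓ, hker⟩ := exists_vecMul_eq_zero_iff.2 hx
  have heig : ℓ ᵥ* M = x • ℓ := by
    rwa [vecMul_sub, vecMul_smul, vecMul_one, sub_eq_zero] at hker
  have hℓ0 : ℓ 0 ≠ 0 := by
    intro h0
    have hcol0 := congrFun heig 0
    have hcol1 := congrFun heig 1
    simp only [vecMul, dotProduct, Fin.sum_univ_three, Pi.smul_apply, smul_eq_mul,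
      h20, h0, zero_mul, mul_zero, zero_add, add_zero] at hcol0 hcol1
    have h1 : ℓ 1 = 0 := (mul_eq_zero.1 hcol0).resolve_right h10
    rw [h1, zero_mul, zero_add, mul_zero] at hcol1
    have h2 : ℓ 2 = 0 := (mul_eq_zero.1 hcol1).resolve_right h21
    exact hℓ (funext fun i => by fin_cases i <;> assumption)
  exact ⟨(ℓ 0)⁻¹ • ℓ, by rw [smul_vecMul, heig, smul_comm], inv_mul_cancel₀ hℓ0⟩

theorem apply_zpow_smul {G V K : Type*} [Group G] [MulAction G V] [Field K] {g : G} {f : V → K}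
    {x : K} (hx : x ≠ 0) (hf : ∀ v, f (g • v) = x * f v) (k : ℤ) (v : V) :
    f (g ^ k • v) = x ^ k * f v := by
  have hf_inv (v : V) : f (g⁻¹ • v) = x⁻¹ * f v := by
    rw [eq_inv_mul_iff_mul_eq₀ hx, ← hf, smul_inv_smul]
  induction k generalizing v with
  | zero => simp
  | succ k ih => rw [_root_.zpow_add_one, mul_smul, ih, hf, zpow_add_one₀ hx, mul_assoc]
  | pred k ih => rw [_root_.zpow_sub_one, mul_smul, ih, hf_inv, zpow_sub_one₀ hx, mul_assoc]

theorem exists_abs_zpow_smul_mem_Ico {G V : Type*} [Group G] [MulAction G V] {g : G}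
    {f : V → ℝ} {x : ℝ} (hx : 1 < x) (hf : ∀ v, f (g • v) = x * f v) {v : V} (hv : f v ≠ 0)
    {s : ℝ} (hs : 0 < s) :
    ∃ k : ℤ, |f (g ^ k • v)| ∈ Set.Ico s (s * x) := by
  have hx0 : 0 < x := one_pos.trans hx
  obtain ⟨k, hk_le, hk_lt⟩ := exists_mem_Ico_zpow (div_pos (abs_pos.2 hv) hs) hx
  refine ⟨-k, ?_⟩
  have habs : |f (g ^ (-k) • v)| = |f v| / x ^ k := by
    rw [apply_zpow_smul hx0.ne' hf, abs_mul, abs_of_pos (zpow_pos hx0 _), _root_.zpow_neg,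
      inv_mul_eq_div]
  have hxk : 0 < x ^ k := zpow_pos hx0 k
  rw [le_div_iff₀ hs, mul_comm] at hk_le
  rw [div_lt_iff₀ hs, zpow_add_one₀ hx0.ne', mul_comm, mul_left_comm, mul_comm] at hk_lt
  rw [habs, Set.mem_Ico, le_div_iff₀ hxk, div_lt_iff₀ hxk]
  exact ⟨hk_le, hk_lt⟩

end Eigenfunctional

section Estimates

theorem exists_root_ge {T S L : ℝ} (hL : 1 ≤ L) (hT : L + |S| ≤ T) :
    ∃ x ≥ L, x ^ 3 - T * x ^ 2 + S * x - 1 = 0 := by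
  have hS := abs_nonneg S
  have hleft : L ^ 3 - T * L ^ 2 + S * L - 1 ≤ 0 := by
    nlinarith [le_abs_self S, mul_nonneg hS (sub_nonneg.2 hL),
      mul_nonneg (sq_nonneg L) (sub_nonneg.2 hT)]
  obtain ⟨y, hy⟩ : ∃ y, y = T + |S| + 1 := ⟨_, rfl⟩
  have hy1 : 1 ≤ y := by linarith
  have hright : 0 ≤ y ^ 3 - T * y ^ 2 + S * y - 1 := by
    obtain rfl : T = y - |S| - 1 := by linarith
    have hSy : |S| * y ≤ |S| * y ^ 2 := by gcongr; nlinarith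
    nlinarith [neg_abs_le S]
  have hcont : ContinuousOn (fun x : ℝ => x ^ 3 - T * x ^ 2 + S * x - 1) (Set.Icc L y) := by
    fun_prop
  obtain ⟨x, hx, hroot⟩ := intermediate_value_Icc (by linarith) hcont ⟨hleft, hright⟩
  exact ⟨x, hx.1, hroot⟩

theorem exists_linear_mul_quadratic_factorization {T S L : ℝ} (hL : 1 ≤ L) (hT : L + |S| ≤ T) :
    ∃ x ≥ L, ∃ τ ν, T = x + τ ∧ S = x * τ + ν ∧ x * ν = 1 := by
  obtain ⟨x, hxL, hroot⟩ := exists_root_ge hL hT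
  have hx : x ≠ 0 := by linarith
  refine ⟨x, hxL, T - x, x⁻¹, by ring, ?_, mul_inv_cancel₀ hx⟩
  field_simp
  linear_combination hroot

variable {D S x τ ν A B c : ℝ}

theorem sq_le_of_sq_abs_add_one_le (hS : S = x * τ + ν) (hν : x * ν = 1)
    (hSx : (|S| + 1) ^ 2 ≤ x) : τ ^ 2 ≤ ν := by
  have hx : 1 ≤ x := by nlinarith [abs_nonneg S]
  have hν0 : 0 < ν := pos_of_mul_pos_right (hν ▸ one_pos) (zero_le_one.trans hx)
  have hν1 : ν ≤ 1 := by nlinarith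
  have hτ : τ = ν * (S - ν) := by linear_combination (τ * hν + ν * hS) * (-1)
  have hSν : |S - ν| ≤ |S| + 1 := (abs_sub S ν).trans (by rw [abs_of_pos hν0]; gcongr)
  calc τ ^ 2 = ν ^ 2 * |S - ν| ^ 2 := by rw [hτ, mul_pow, sq_abs]
    _ ≤ ν ^ 2 * x := by gcongr; exact (pow_le_pow_left₀ (abs_nonneg _) hSν 2).trans hSx
    _ = ν := by linear_combination ν * hν

theorem three_quarters_mul_sq_left_le (hτ : τ ^ 2 ≤ ν) :
    3 / 4 * A ^ 2 ≤ A ^ 2 + A * B * τ + B ^ 2 * ν := by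
  nlinarith [mul_nonneg (sq_nonneg B) (sub_nonneg.2 hτ), sq_nonneg (A / 2 + B * τ)]

theorem three_quarters_mul_sq_right_le (hτ : τ ^ 2 ≤ ν) :
    3 / 4 * (B ^ 2 * ν) ≤ A ^ 2 + A * B * τ + B ^ 2 * ν := by
  nlinarith [mul_nonneg (sq_nonneg B) (sub_nonneg.2 hτ), sq_nonneg (A + B * τ / 2)]

theorem mul_abs_le_div_sixteen {t : ℝ} (hD : 0 ≤ D) (hDx : 1536 * D ^ 3 ≤ x)
    (ht : t ^ 2 ≤ 6 * D * x) : D * |t| ≤ x / 16 := by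
  have hx : 0 ≤ x := le_trans (by positivity) hDx
  refine (abs_le_of_sq_le_sq' (a := D * |t|) ?_ (by positivity)).2
  calc (D * |t|) ^ 2 = D ^ 2 * t ^ 2 := by rw [mul_pow, sq_abs]
    _ ≤ D ^ 2 * (6 * D * x) := by gcongr
    -- the constant `1536` is `6 * 16 ^ 2`
    _ = 1536 * D ^ 3 * x / 256 := by ring
    _ ≤ x * x / 256 := by gcongr
    _ = (x / 16) ^ 2 := by ring

theorem mul_abs_remainder_le {p : ℝ} (hD : 1 ≤ D) (hDx : 1536 * D ^ 3 ≤ x) (hν : x * ν = 1)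
    (hτ : τ ^ 2 ≤ ν) (hp : 1 ≤ 4 * D * |p|) (hN : |p| * (A ^ 2 + A * B * τ + B ^ 2 * ν) < 1) :
    D * |A| ≤ x / 16 ∧ D * |B| ≤ x / 16 := by
  have hD3 : 1 ≤ D ^ 3 := one_le_pow₀ hD
  have hA := three_quarters_mul_sq_left_le (A := A) (B := B) hτ
  have hB := three_quarters_mul_sq_right_le (A := A) (B := B) hτ
  have hQ : A ^ 2 + A * B * τ + B ^ 2 * ν ≤ 4 * D := by
    generalize A ^ 2 + A * B * τ + B ^ 2 * ν = Q at *
    have hQ0 : 0 ≤ Q := hA.trans' (by positivity)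
    calc Q ≤ 4 * D * |p| * Q := le_mul_of_one_le_left hQ0 hp
      _ = 4 * D * (|p| * Q) := by ring
      _ ≤ 4 * D := mul_le_of_le_one_right (by linarith) hN.le
  have hA2 : A ^ 2 ≤ 6 * D * x := by nlinarith
  have hB2 : B ^ 2 ≤ 6 * D * x := by
    calc B ^ 2 = B ^ 2 * ν * x := by linear_combination -B ^ 2 * hν
      _ ≤ 6 * D * x := mul_le_mul_of_nonneg_right (by linarith) (by linarith)
  have hD0 : 0 ≤ D := zero_le_one.trans hD
  exact ⟨mul_abs_le_div_sixteen hD0 hDx hA2, mul_abs_le_div_sixteen hD0 hDx hB2⟩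

theorem mul_abs_leading_coeff_lt_one {p : ℝ} (hD : 0 ≤ D) (hx : 2 ≤ x) (hν : 0 ≤ ν)
    (hS : S = x * τ + ν) (hSx : |S| ≤ x) (hp : 4 * D * |p| < x) (hA : D * |A| ≤ x / 16)
    (hB : D * |B| ≤ x / 16) (hval : p = A + B * x + c * (x ^ 2 - τ * x + ν)) : D * |c| < 1 := by
  have hquad : x ^ 2 / 2 ≤ x ^ 2 - τ * x + ν := by nlinarith [le_abs_self S]
  have hremainder : |c| * (x ^ 2 - τ * x + ν) ≤ |p| + |A| + |B| * x := by
    calc |c| * (x ^ 2 - τ * x + ν) = |p - A - B * x| := by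
          rw [← abs_of_nonneg ((by positivity : 0 ≤ x ^ 2 / 2).trans hquad), ← abs_mul, hval]
          congr 1
          ring
      _ ≤ |p| + |A| + |B * x| := (abs_sub _ _).trans (add_le_add_left (abs_sub _ _) _)
      _ = |p| + |A| + |B| * x := by rw [abs_mul, abs_of_nonneg (by linarith : 0 ≤ x)]
  refine lt_of_mul_lt_mul_right ?_ (by positivity : 0 ≤ x ^ 2 / 2)
  calc D * |c| * (x ^ 2 / 2) ≤ D * |c| * (x ^ 2 - τ * x + ν) := by gcongr
    _ ≤ D * (|p| + |A| + |B| * x) := by rw [mul_assoc]; gcongr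
    _ = D * |p| + D * |A| + D * |B| * x := by ring
    _ ≤ x / 4 + x / 16 + x / 16 * x := by gcongr; linarith
    _ < 1 * (x ^ 2 / 2) := by nlinarith

theorem mul_abs_linear_coeff_lt_one {p : ℝ} (hD : 0 ≤ D) (hx : 0 < x) (hp : 4 * D * |p| < x)
    (hA : D * |A| ≤ x / 16) (hval : p = A + B * x) : D * |B| < 1 := by
  have hBx : |B| * x ≤ |p| + |A| := by
    calc |B| * x = |p - A| := by rw [hval, add_sub_cancel_left, abs_mul, abs_of_pos hx]
      _ ≤ |p| + |A| := abs_sub _ _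
  refine lt_of_mul_lt_mul_right ?_ hx.le
  calc D * |B| * x ≤ D * (|p| + |A|) := by rw [mul_assoc]; gcongr
    _ < 1 * x := by linarith

end Estimates

section Reduction

theorem abs_coord_lt_one_of_abs_det_krylov_lt {M : Matrix (Fin 3) (Fin 3) ℝ} {x τ ν : ℝ}
    {ℓ w : Fin 3 → ℝ} (h20 : M 2 0 = 0) (h10 : 1 ≤ M 1 0) (h21 : 1 ≤ M 2 1)
    (htr : M.trace = x + τ) (hadj : M.adjugate.trace = x * τ + ν) (hdet : M.det = x * ν)
    (hν : x * ν = 1) (hDx : 1536 * (M 1 0 * M 2 1) ^ 3 ≤ x)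
    (hSx : (|M.adjugate.trace| + 1) ^ 2 ≤ x) (hℓ : ℓ ᵥ* M = x • ℓ) (hℓ0 : ℓ 0 = 1)
    (hlo : 1 ≤ 4 * (M 1 0 * M 2 1) * |ℓ ⬝ᵥ w|) (hhi : 4 * (M 1 0 * M 2 1) * |ℓ ⬝ᵥ w| < x)
    (hw : |(krylov M w).det| < M 1 0 ^ 2 * M 2 1) :
    |w 2| < 1 ∧ (w 2 = 0 → |w 1| < 1) := by
  have hD : 1 ≤ M 1 0 * M 2 1 := one_le_mul_of_one_le_of_one_le h10 h21
  have hD3 : 1 ≤ (M 1 0 * M 2 1) ^ 3 := one_le_pow₀ hD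
  have hx : 2 ≤ x := by linarith
  have hτ : τ ^ 2 ≤ ν := sq_le_of_sq_abs_add_one_le hadj hν hSx
  obtain ⟨A, B, c, rfl⟩ := exists_aeval_quadPoly_mulVec_single h20 (by linarith) (by linarith) τ ν w
  set p := (quadPoly τ ν A B c).eval x with hp
  have hℓw : ℓ ⬝ᵥ (aeval M (quadPoly τ ν A B c) *ᵥ Pi.single 0 1) = p := by
    rw [dotProduct_mulVec, vecMul_aeval_of_vecMul_eq_smul hℓ, smul_dotProduct,
      dotProduct_single_one, hℓ0, smul_eq_mul, mul_one]
  rw [hℓw] at hlo hhi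
  have hN : |p| * (A ^ 2 + A * B * τ + B ^ 2 * ν) < 1 := by
    have hς : 0 < M 1 0 ^ 2 * M 2 1 := by positivity
    rw [det_krylov_aeval_quadPoly_mulVec_single h20 htr hadj hdet, abs_mul, abs_of_pos hς,
      mul_lt_iff_lt_one_right hς, abs_mul] at hw
    exact (mul_le_mul_of_nonneg_left (le_abs_self _) (abs_nonneg p)).trans_lt hw
  obtain ⟨hA, hB⟩ := mul_abs_remainder_le hD hDx hν hτ hlo hN
  rw [eval_quadPoly] at hp
  have hc : (M 1 0 * M 2 1) * |c| < 1 :=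
    mul_abs_leading_coeff_lt_one (by linarith) hx ((sq_nonneg τ).trans hτ) hadj
      (by nlinarith [abs_nonneg M.adjugate.trace]) hhi hA hB hp
  rw [aeval_quadPoly_mulVec_single h20]
  simp only [cons_val, cons_val_one]
  refine ⟨by rwa [abs_mul, abs_of_pos (by linarith)], fun hw2 => ?_⟩
  obtain rfl : c = 0 := (mul_eq_zero.1 hw2).resolve_left (by positivity)
  have hB1 : (M 1 0 * M 2 1) * |B| < 1 :=
    mul_abs_linear_coeff_lt_one (by linarith) (by linarith) hhi hA (by simpa using hp)
  calc |M 1 0 * (B + 0 * (M 0 0 + M 1 1 - τ))| = M 1 0 * |B| := by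
        rw [zero_mul, add_zero, abs_mul, abs_of_pos (by linarith)]
    _ ≤ (M 1 0 * M 2 1) * |B| := by
        gcongr
        exact le_mul_of_one_le_right (by linarith) h21
    _ < 1 := hB1

theorem exists_eigenfunctional_forall_abs_coord_lt_one {M : Matrix (Fin 3) (Fin 3) ℝ}
    (hdet : M.det = 1) (h20 : M 2 0 = 0) (h10 : 1 ≤ M 1 0) (h21 : 1 ≤ M 2 1)
    (htr : 1536 * (M 1 0 * M 2 1) ^ 3 + (|M.adjugate.trace| + 1) ^ 2 + |M.adjugate.trace|
      ≤ M.trace) :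
    ∃ x > 1, ∃ ℓ : Fin 3 → ℝ, ℓ ≠ 0 ∧ ℓ ᵥ* M = x • ℓ ∧
      ∀ w, |ℓ ⬝ᵥ w| ∈ Set.Ico (4 * (M 1 0 * M 2 1))⁻¹ ((4 * (M 1 0 * M 2 1))⁻¹ * x) →
        |(krylov M w).det| < M 1 0 ^ 2 * M 2 1 → |w 2| < 1 ∧ (w 2 = 0 → |w 1| < 1) := by
  have hD3 : 1 ≤ (M 1 0 * M 2 1) ^ 3 :=
    one_le_pow₀ (one_le_mul_of_one_le_of_one_le h10 h21)
  have hS2 : 0 ≤ (|M.adjugate.trace| + 1) ^ 2 := sq_nonneg _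
  obtain ⟨x, hx, τ, ν, hτ, hS, hν⟩ := exists_linear_mul_quadratic_factorization (by linarith) htr
  have hdet' : M.det = x * ν := hdet.trans hν.symm
  obtain ⟨ℓ, hℓ, hℓ0⟩ := exists_vecMul_eq_smul_and_apply_zero_eq_one h20 (by positivity)
    (by positivity) (det_sub_smul_one_eq_zero hτ hS hdet')
  refine ⟨x, by linarith, ℓ, fun h => by simp [h] at hℓ0, hℓ, fun w ⟨hlo, hhi⟩ hw => ?_⟩
  rw [inv_le_iff_one_le_mul₀' (by positivity)] at hlo
  rw [lt_inv_mul_iff₀ (by positivity)] at hhi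
  exact abs_coord_lt_one_of_abs_det_krylov_lt h20 h10 h21 hτ hS hdet' hν (by linarith)
    (by linarith) hℓ hℓ0 hlo hhi hw

theorem exists_det_krylov_eq_and_abs_dotProduct_mem_Ico {M : M3} (hdet : M.det = 1)
    {ℓ : Fin 3 → ℝ} {x s : ℝ} (hx : 1 < x) (hs : 0 < s)
    (hℓM : ℓ ᵥ* M.map (Int.castRingHom ℝ) = x • ℓ) {v : Fin 3 → ℤ}
    (hv : ℓ ⬝ᵥ (Int.castRingHom ℝ ∘ v) ≠ 0) :
    ∃ w : Fin 3 → ℤ, (krylov M w).det = (krylov M v).det ∧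
      |ℓ ⬝ᵥ (Int.castRingHom ℝ ∘ w)| ∈ Set.Ico s (s * x) := by
  let g : SpecialLinearGroup (Fin 3) ℤ := ⟨M, hdet⟩
  have hg (u : Fin 3 → ℤ) :
      ℓ ⬝ᵥ (Int.castRingHom ℝ ∘ (g • u)) = x * ℓ ⬝ᵥ (Int.castRingHom ℝ ∘ u) := by
    have hmap : Int.castRingHom ℝ ∘ (g • u) =
        M.map (Int.castRingHom ℝ) *ᵥ (Int.castRingHom ℝ ∘ u) :=
      funext fun i => RingHom.map_mulVec _ M u i
    rw [hmap, dotProduct_mulVec, hℓM, smul_dotProduct, smul_eq_mul]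
  obtain ⟨k, hk⟩ :=
    exists_abs_zpow_smul_mem_Ico (f := fun u => ℓ ⬝ᵥ (Int.castRingHom ℝ ∘ u)) hx hg hv hs
  refine ⟨g ^ k • v, ?_, hk⟩
  have hcomm : Commute (g ^ k).1 M := congrArg Subtype.val ((Commute.refl g).zpow_left k).eq
  change (krylov M ((g ^ k).1 *ᵥ v)).det = (krylov M v).det
  rw [det_krylov_mulVec hcomm, (g ^ k).2, one_mul]

theorem hessComplexity_le_abs_det_krylov_of_coords_eq_zero {M : M3} (h20 : M 2 0 = 0)
    (h21 : 0 ≤ M 2 1) {w : Fin 3 → ℤ} (hw1 : w 1 = 0) (hw2 : w 2 = 0)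
    (hw : (krylov M w).det ≠ 0) : HessComplexity M ≤ |(krylov M w).det| := by
  have hw_single : w = w 0 • Pi.single 0 1 := by
    ext i
    fin_cases i <;> simp [hw1, hw2]
  have hς : (krylov M w).det = w 0 ^ 3 * HessComplexity M := by
    rw [hw_single, krylov_smul, det_smul, ← hessComplexity_eq_det_krylov_single_zero h20]
    simp
  have hw0 : 1 ≤ |w 0 ^ 3| := Int.one_le_abs fun h => hw (by rw [hς, h, zero_mul])
  have hς0 : 0 ≤ HessComplexity M := mul_nonneg (sq_nonneg _) h21
  rw [hς, abs_mul, abs_of_nonneg hς0]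
  exact le_mul_of_one_le_left hς0 hw0

theorem hessComplexity_le_abs_det_krylov {M : M3} (hdet : M.det = 1) (h20 : M 2 0 = 0)
    (h10 : 0 < M 1 0) (h21 : 0 < M 2 1)
    (htr : 1536 * (M 1 0 * M 2 1) ^ 3 + (|M.adjugate.trace| + 1) ^ 2 + |M.adjugate.trace|
      ≤ M.trace) {v : Fin 3 → ℤ} (hv : (krylov M v).det ≠ 0) :
    HessComplexity M ≤ |(krylov M v).det| := by
  let N : Matrix (Fin 3) (Fin 3) ℝ := M.map (Int.castRingHom ℝ)
  have hNdet : N.det = 1 := by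
    change ((Int.castRingHom ℝ).mapMatrix M).det = 1
    rw [← RingHom.map_det, hdet, map_one]
  have hN10 : 1 ≤ N 1 0 := Int.cast_one_le_of_pos h10
  have hN21 : 1 ≤ N 2 1 := Int.cast_one_le_of_pos h21
  have hNtr : 1536 * (N 1 0 * N 2 1) ^ 3 + (|N.adjugate.trace| + 1) ^ 2 + |N.adjugate.trace|
      ≤ N.trace := by
    simpa [N, trace_fin_three, adjugate_fin_three] using Int.cast_mono (R := ℝ) htr
  obtain ⟨x, hx, ℓ, hℓ, hℓM, hsmall⟩ := exists_eigenfunctional_forall_abs_coord_lt_one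
    hNdet (by simp [N, h20]) hN10 hN21 hNtr
  have hℓv : ℓ ⬝ᵥ (Int.castRingHom ℝ ∘ v) ≠ 0 := fun h => hv <| by
    exact_mod_cast (intCast_det_krylov M v).trans
      (det_krylov_eq_zero_of_dotProduct_eq_zero hℓM hℓ h)
  obtain ⟨w, hwv, hw⟩ := exists_det_krylov_eq_and_abs_dotProduct_mem_Ico hdet hx
    (by positivity : 0 < (4 * (N 1 0 * N 2 1))⁻¹) hℓM hℓv
  rw [← hwv] at hv ⊢
  by_contra! hlt
  have hltN : |(krylov N (Int.castRingHom ℝ ∘ w)).det| < N 1 0 ^ 2 * N 2 1 := by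
    rw [← intCast_det_krylov]
    simpa [N, HessComplexity] using (Int.cast_lt (R := ℝ)).2 hlt
  obtain ⟨hw2_lt, hw1_lt⟩ := hsmall _ hw hltN
  have eq_zero {i : Fin 3} (hi : |(Int.castRingHom ℝ ∘ w) i| < 1) : w i = 0 := by
    change |(w i : ℝ)| < 1 at hi
    exact Int.abs_lt_one_iff.1 (by exact_mod_cast hi)
  have hw2 : w 2 = 0 := eq_zero hw2_lt
  have hw1 : w 1 = 0 := eq_zero (hw1_lt (by simp [hw2]))
  exact hlt.not_ge (hessComplexity_le_abs_det_krylov_of_coords_eq_zero h20 h21.le hw1 hw2 hv)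

theorem sigmaReduced_of_le_trace {M : M3} (hdet : M.det = 1) (hM : IsPerfectHessenberg M)
    (htr : 1536 * (M 1 0 * M 2 1) ^ 3 + (|M.adjugate.trace| + 1) ^ 2 + |M.adjugate.trace|
      ≤ M.trace) : SigmaReduced M := by
  refine ⟨hdet, hM, fun M' _ hM' hconj => ?_⟩
  obtain ⟨v, hv⟩ := hconj.exists_hessComplexity_eq_abs_det_krylov hM'
  have hv0 : (krylov M v).det ≠ 0 := abs_pos.1 (hv ▸ hM'.hessComplexity_pos)
  obtain ⟨h20, h00, h10, h01, h21, -⟩ := hM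
  exact hv ▸ hessComplexity_le_abs_det_krylov hdet h20 (h00.trans_lt h10) (h01.trans_lt h21) htr hv0

end Reduction

section Ray

variable (a11 a12 a13 a21 a22 a23 a32 a33 m n : ℤ)

theorem det_Hmat :
    (Hmat a11 a12 a13 a21 a22 a23 a32 a33 m n).det =
      (Hmat a11 a12 a13 a21 a22 a23 a32 a33 0 0).det := by
  simp only [Hmat, det_fin_three, of_apply, cons_val', cons_val_zero, cons_val_one, cons_val]
  ring

theorem trace_Hmat_ray (t : ℤ) :
    (Hmat a11 a12 a13 a21 a22 a23 a32 a33 (m + a11 * t) (n + a21 * t)).trace =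
      (Hmat a11 a12 a13 a21 a22 a23 a32 a33 m n).trace + a21 * a32 * t := by
  simp only [Hmat, trace_fin_three, of_apply, cons_val', cons_val_zero, cons_val_one, cons_val]
  ring

theorem trace_adjugate_Hmat_ray (t : ℤ) :
    (Hmat a11 a12 a13 a21 a22 a23 a32 a33 (m + a11 * t) (n + a21 * t)).adjugate.trace =
      (Hmat a11 a12 a13 a21 a22 a23 a32 a33 m n).adjugate.trace := by
  simp only [Hmat, trace_fin_three, adjugate_fin_three, of_apply, cons_val', cons_val_zero,
    cons_val_one, cons_val]
  ring

end Ray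

theorem asymptotic_sigma_reducibility_dir_a11_a21_general
    (a11 a12 a13 a21 a22 a23 a32 a33 m n : ℤ)
    (hdet : (Hmat a11 a12 a13 a21 a22 a23 a32 a33 0 0).det = 1)
    (h11 : 0 ≤ a11) (h1121 : a11 < a21)
    (h12 : 0 ≤ a12) (h1232 : a12 < a32)
    (h22 : 0 ≤ a22) (h2232 : a22 < a32) :
    ∃ T : ℤ, ∀ t : ℤ, T < t →
      SigmaReduced (Hmat a11 a12 a13 a21 a22 a23 a32 a33 (m + a11 * t) (n + a21 * t)) := by
  let S := (Hmat a11 a12 a13 a21 a22 a23 a32 a33 m n).adjugate.trace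
  let r := (Hmat a11 a12 a13 a21 a22 a23 a32 a33 m n).trace
  let K := 1536 * (a21 * a32) ^ 3 + (|S| + 1) ^ 2 + |S|
  refine ⟨|K - r|, fun t ht => ?_⟩
  have hperfect : IsPerfectHessenberg
      (Hmat a11 a12 a13 a21 a22 a23 a32 a33 (m + a11 * t) (n + a21 * t)) :=
    ⟨rfl, h11, h1121, h12, h1232, h22, h2232⟩
  have hD : 0 < a21 * a32 := mul_pos (h11.trans_lt h1121) (h12.trans_lt h1232)
  have hDt : t ≤ a21 * a32 * t := le_mul_of_one_le_left ((abs_nonneg _).trans ht.le) hD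
  have hKt : K ≤ r + a21 * a32 * t := by linarith [le_abs_self (K - r)]
  refine sigmaReduced_of_le_trace ((det_Hmat ..).trans hdet) hperfect ?_
  rw [trace_Hmat_ray, trace_adjugate_Hmat_ray]
  exact hKt

/-- Along any NRS-ray of direction (a11,a21), all but finitely many matrices are
ς-reduced. -/
theorem asymptotic_sigma_reducibility_dir_a11_a21
    (a11 a12 a13 a21 a22 a23 a32 a33 m n : ℤ)
    (hdet : (Hmat a11 a12 a13 a21 a22 a23 a32 a33 0 0).det = 1)
    (h11 : 0 ≤ a11) (h1121 : a11 < a21)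
    (h12 : 0 ≤ a12) (h1232 : a12 < a32)
    (h22 : 0 ≤ a22) (h2232 : a22 < a32)
    (hray : ∀ t : ℤ, 0 ≤ t →
      Irreducible
        ((Hmat a11 a12 a13 a21 a22 a23 a32 a33 (m + a11 * t) (n + a21 * t)).charpoly.map
          (Int.castRingHom ℚ)) ∧
      ∃ z : ℂ, z.im ≠ 0 ∧
        Polynomial.aeval z
          (Hmat a11 a12 a13 a21 a22 a23 a32 a33 (m + a11 * t) (n + a21 * t)).charpoly = 0) :
    ∃ T : ℤ, ∀ t : ℤ, T < t →
      SigmaReduced (Hmat a11 a12 a13 a21 a22 a23 a32 a33 (m + a11 * t) (n + a21 * t)) :=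
  asymptotic_sigma_reducibility_dir_a11_a21_general a11 a12 a13 a21 a22 a23 a32 a33 m n hdet
    h11 h1121 h12 h1232 h22 h2232
end

section
/- (Asymptotic directions of the NRS-domain.) Assume 0 ≤ a11 < a21, 0 ≤ a12 < a32, 0 ≤ a22 < a32. A nonzero pair of integers (p,q) is an asymptotic direction if and only if either (q = 0 and p < 0) or (q > 0 and a21·p = a11·q); i.e., the asymptotic directions are exactly the positive multiples of (−1,0) and of (a11,a21). -/
open Polynomial

/-- An NRS-matrix: the characteristic polynomial has one real root and a pair of
non-real complex conjugate roots. -/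
def IsNRS (M : M3) : Prop :=
  ∃ (r : ℝ) (z : ℂ), z.im ≠ 0 ∧
    M.charpoly.map (Int.castRingHom ℂ) =
      (X - C (r : ℂ)) * (X - C z) * (X - C ((starRingEnd ℂ) z))

/-!
A real cubic has a pair of non-real roots exactly when its discriminant is negative. Along a ray
in direction `(p, q)` the characteristic polynomial `x³ + b x² + c x - det` of `H(m, n)` has
constant term fixed, while `(b, c)` moves on a line of direction
`(u, v) = (-a32 q, a32 (a11 q - a21 p))`. The term `b² c²` of the discriminant makes it eventually
positive if `u` and `v` are both nonzero. If `u = 0` the term `-4 c³` takes over, so that `v` must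
be positive; if `v = 0` it is `4 b³ det`, so that `det * u` must be negative.
-/

section RealCubic

open scoped ComplexConjugate

theorem cubic_discr_map {R S : Type*} [CommRing R] [CommRing S] (φ : R →+* S) (P : Cubic R) :
    (P.map φ).discr = φ P.discr := by
  simp only [Cubic.discr, Cubic.map, map_add, map_sub, map_mul, map_pow, map_ofNat]

theorem cubic_discr_reverse {R : Type*} [CommRing R] (a b c d : R) :
    (Cubic.mk d c b a).discr = (Cubic.mk a b c d).discr := by
  simp only [Cubic.discr]
  ring

variable {P : Cubic ℝ}

theorem exists_root_im_ne_zero_of_discr_neg (ha : P.a ≠ 0) (hP : P.discr < 0) :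
    ∃ z : ℂ, aeval z P.toPoly = 0 ∧ z.im ≠ 0 := by
  obtain ⟨x, y, z, hroots⟩ := (Cubic.splits_iff_roots_eq_three (φ := Complex.ofRealHom) ha).mp
    (IsAlgClosed.splits _)
  by_contra! hreal
  have ofReal_re_eq {w : ℂ} (hw : w ∈ (P.map Complex.ofRealHom).roots) : (w.re : ℂ) = w := by
    refine Complex.ext rfl (hreal w ?_).symm
    rw [Cubic.map_roots] at hw
    exact (eval_map_algebraMap P.toPoly w).symm.trans (isRoot_of_mem_roots hw)
  have hdiscr := Cubic.discr_eq_prod_three_roots ha hroots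
  rw [← ofReal_re_eq (w := x) (by simp [hroots]), ← ofReal_re_eq (w := y) (by simp [hroots]),
    ← ofReal_re_eq (w := z) (by simp [hroots])] at hdiscr
  have hsq : P.discr = (P.a * P.a * (x.re - y.re) * (x.re - z.re) * (y.re - z.re)) ^ 2 :=
    Complex.ofReal_injective (by simpa using hdiscr)
  exact (hsq ▸ hP).not_ge (sq_nonneg _)

theorem map_ofRealHom_quadratic (z : ℂ) :
    (X ^ 2 - C (2 * z.re) * X + C (‖z‖ ^ 2) : ℝ[X]).map Complex.ofRealHom =
      (X - C z) * (X - C (conj z)) := by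
  have hadd := congrArg (C : ℂ → ℂ[X]) (Complex.add_conj z)
  have hmul := congrArg (C : ℂ → ℂ[X]) (Complex.mul_conj' z)
  simp only [C_add, C_mul, C_pow] at hadd hmul
  simp only [Polynomial.map_add, Polynomial.map_sub, Polynomial.map_mul, Polynomial.map_pow,
    map_X, map_C, Complex.ofRealHom_eq_coe, C_pow]
  linear_combination X * hadd - hmul

theorem exists_map_eq_prod_of_root_im_ne_zero (ha : P.a ≠ 0) {z : ℂ}
    (hroot : aeval z P.toPoly = 0) (hz : z.im ≠ 0) :
    ∃ r : ℝ, P.toPoly.map Complex.ofRealHom =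
      C (P.a : ℂ) * (X - C (r : ℂ)) * (X - C z) * (X - C (conj z)) := by
  obtain ⟨L, hL⟩ := P.toPoly.quadratic_dvd_of_aeval_eq_zero_im_ne_zero hroot hz
  set Q : ℝ[X] := X ^ 2 - C (2 * z.re) * X + C (‖z‖ ^ 2) with hQ
  have hQdeg : Q.natDegree = 2 := by
    rw [hQ]
    compute_degree!
  have hQmonic : Q.Monic := by
    rw [hQ]
    monicity!
  have hLdeg : L.natDegree = 1 := by
    have hL0 : L ≠ 0 := by
      rintro rfl
      exact Cubic.ne_zero_of_a_ne_zero ha (hL.trans (mul_zero Q))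
    have hdeg := Cubic.natDegree_of_a_ne_zero ha
    rw [hL, hQmonic.natDegree_mul' hL0, hQdeg] at hdeg
    lia
  obtain ⟨s, hs, b, rfl⟩ := natDegree_eq_one.mp hLdeg
  have hsa : s = P.a := by
    rw [← Cubic.leadingCoeff_of_a_ne_zero ha, hL, leadingCoeff_monic_mul hQmonic,
      leadingCoeff_linear hs]
  have hlinear : C s * X + C b = C P.a * (X - C (-(b / P.a))) := by
    rw [mul_sub, ← C_mul, hsa]
    field_simp
    simp
  refine ⟨-(b / P.a), ?_⟩
  rw [hL, hlinear, Polynomial.map_mul, Polynomial.map_mul, hQ, map_ofRealHom_quadratic,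
    Polynomial.map_sub, map_C, map_C, map_X, Complex.ofRealHom_eq_coe, Complex.ofRealHom_eq_coe]
  ring

theorem discr_eq_of_map_eq_prod (ha : P.a ≠ 0) {r : ℝ} {z : ℂ}
    (hfactor : P.toPoly.map Complex.ofRealHom =
      C (P.a : ℂ) * (X - C (r : ℂ)) * (X - C z) * (X - C (conj z))) :
    P.discr = -(4 * P.a ^ 4 * z.im ^ 2 * Complex.normSq (r - z) ^ 2) := by
  have hroots : (P.map Complex.ofRealHom).roots = {(r : ℂ), z, conj z} := by
    rw [Cubic.map_roots, hfactor, mul_assoc, mul_assoc,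
      roots_C_mul _ (Complex.ofReal_ne_zero.mpr ha),
      ← roots_multiset_prod_X_sub_C {(r : ℂ), z, conj z}]
    simp
  have hnorm : ((r : ℂ) - z) * (r - conj z) = Complex.normSq (r - z) := by
    rw [← Complex.mul_conj, map_sub, Complex.conj_ofReal]
  apply Complex.ofReal_injective
  calc (P.discr : ℂ) = (P.a * P.a * (r - z) * (r - conj z) * (z - conj z)) ^ 2 :=
        Cubic.discr_eq_prod_three_roots ha hroots
    _ = P.a ^ 4 * (((r : ℂ) - z) * (r - conj z)) ^ 2 * (z - conj z) ^ 2 := by ring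
    _ = P.a ^ 4 * Complex.normSq (r - z) ^ 2 * (((2 * z.im : ℝ) : ℂ) * Complex.I) ^ 2 := by
        rw [hnorm, Complex.sub_conj]
    _ = (-(4 * P.a ^ 4 * z.im ^ 2 * Complex.normSq (r - z) ^ 2) : ℝ) := by
        push_cast
        linear_combination 4 * P.a ^ 4 * Complex.normSq (r - z) ^ 2 * z.im ^ 2 * Complex.I_sq

theorem discr_neg_iff_exists_map_eq_prod (ha : P.a ≠ 0) :
    P.discr < 0 ↔ ∃ (r : ℝ) (z : ℂ), z.im ≠ 0 ∧ P.toPoly.map Complex.ofRealHom =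
      C (P.a : ℂ) * (X - C (r : ℂ)) * (X - C z) * (X - C (conj z)) := by
  constructor
  · intro hP
    obtain ⟨z, hroot, hz⟩ := exists_root_im_ne_zero_of_discr_neg ha hP
    obtain ⟨r, hfactor⟩ := exists_map_eq_prod_of_root_im_ne_zero ha hroot hz
    exact ⟨r, z, hz, hfactor⟩
  · rintro ⟨r, z, hz, hfactor⟩
    have hrz : 0 < Complex.normSq (r - z) :=
      Complex.normSq_pos.mpr fun h => hz (by simpa using congrArg Complex.im h)
    rw [discr_eq_of_map_eq_prod ha hfactor, neg_lt_zero]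
    positivity

end RealCubic

section CharacteristicCubic

variable {R : Type*} [CommRing R]

/-- The characteristic polynomial of a `3 × 3` matrix as a `Cubic`, whose discriminant decides
whether the matrix is NRS. The sum of the principal `2 × 2` minors is encoded as the trace of the
adjugate. -/
def charCubic (M : Matrix (Fin 3) (Fin 3) R) : Cubic R :=
  ⟨1, -M.trace, M.adjugate.trace, -M.det⟩

theorem toPoly_charCubic (M : Matrix (Fin 3) (Fin 3) R) : (charCubic M).toPoly = M.charpoly := by
  simp only [Cubic.toPoly, charCubic, Matrix.charpoly, Matrix.trace_fin_three,
    Matrix.adjugate_fin_three, Matrix.det_fin_three, Matrix.of_apply, Matrix.cons_val,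
    Matrix.charmatrix_apply_eq, Matrix.charmatrix_apply_ne, map_one, map_add, map_neg, map_sub,
    map_mul, ne_eq, Fin.reduceEq, zero_ne_one, one_ne_zero, not_false_eq_true]
  ring

theorem isNRS_iff_discr_charCubic_neg (M : M3) : IsNRS M ↔ (charCubic M).discr < 0 := by
  have hmap : M.charpoly.map (Int.castRingHom ℂ) =
      ((charCubic M).map (Int.castRingHom ℝ)).toPoly.map Complex.ofRealHom := by
    rw [Cubic.map_toPoly, toPoly_charCubic, Polynomial.map_map]
    congr 1
  have ha : ((charCubic M).map (Int.castRingHom ℝ)).a = 1 := by simp [charCubic, Cubic.map]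
  rw [← Int.cast_lt_zero (R := ℝ), ← eq_intCast (Int.castRingHom ℝ), ← cubic_discr_map,
    discr_neg_iff_exists_map_eq_prod (ha ▸ one_ne_zero), IsNRS, hmap, ha]
  simp

theorem charCubic_Hmat_ray (a11 a12 a13 a21 a22 a23 a32 a33 m n p q t : ℤ) :
    charCubic (Hmat a11 a12 a13 a21 a22 a23 a32 a33 (m + p * t) (n + q * t)) =
      ⟨1, (charCubic (Hmat a11 a12 a13 a21 a22 a23 a32 a33 m n)).b + -(a32 * q) * t,
        (charCubic (Hmat a11 a12 a13 a21 a22 a23 a32 a33 m n)).c +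
          a32 * (a11 * q - a21 * p) * t,
        -(Hmat a11 a12 a13 a21 a22 a23 a32 a33 0 0).det⟩ := by
  ext <;>
    simp only [charCubic, Hmat, Matrix.det_fin_three, Matrix.trace_fin_three,
      Matrix.adjugate_fin_three, Matrix.of_apply, Matrix.cons_val] <;>
    ring

end CharacteristicCubic

section Asymptotics

open Filter

theorem exists_forall_nonneg_ray_iff {R : Type*} [Ring R] [LinearOrder R] [IsOrderedRing R]
    {Q : R → R → Prop} {p q : R} :
    (∃ m n, ∀ t, 0 ≤ t → Q (m + p * t) (n + q * t)) ↔
      ∃ m n, ∀ᶠ t in atTop, Q (m + p * t) (n + q * t) := by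
  constructor
  · rintro ⟨m, n, h⟩
    exact ⟨m, n, (eventually_ge_atTop 0).mono h⟩
  · rintro ⟨m, n, h⟩
    obtain ⟨K, hK⟩ := eventually_atTop.mp h
    refine ⟨m + p * K, n + q * K, fun t ht => ?_⟩
    simpa only [mul_add, add_assoc] using hK (K + t) (le_add_of_nonneg_right ht)

variable {R : Type*} [CommRing R] [LinearOrder R] [IsStrictOrderedRing R] [Archimedean R]

theorem tendsto_eval_atTop_of_leadingCoeff_pos {f : R[X]} (hdeg : 0 < f.degree)
    (hlead : 0 < f.leadingCoeff) : Tendsto (fun t => f.eval t) atTop atTop := by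
  revert hlead
  refine degree_pos_induction_on f hdeg (fun {a} _ hlead => ?_) (fun {g} _ ih hlead => ?_)
    (fun {g a} hg ih hlead => ?_)
  · rw [leadingCoeff_C_mul_X] at hlead
    simpa using tendsto_id.const_mul_atTop' hlead
  · rw [leadingCoeff_mul_X] at hlead
    simpa using (ih hlead).atTop_mul_atTop₀ tendsto_id
  · rw [leadingCoeff_add_of_degree_lt' (degree_C_le.trans_lt hg)] at hlead
    simpa using tendsto_atTop_add_const_right _ a (ih hlead)

theorem eventually_eval_pos_of_coeff_pos {f : R[X]} {n : ℕ} (hdeg : f.natDegree ≤ n)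
    (hcoeff : 0 < f.coeff n) : ∀ᶠ t in atTop, 0 < f.eval t := by
  obtain rfl : f.natDegree = n := hdeg.antisymm (le_natDegree_of_ne_zero hcoeff.ne')
  rcases Nat.eq_zero_or_pos f.natDegree with hzero | hpos
  · rw [hzero] at hcoeff
    rw [eq_C_of_natDegree_eq_zero hzero]
    simp only [eval_C, hcoeff, eventually_true]
  · exact (tendsto_eval_atTop_of_leadingCoeff_pos (natDegree_pos_iff_degree_pos.mp hpos)
      hcoeff).eventually_gt_atTop 0

variable (a b c d : R) {u v : R}

theorem eventually_discr_pos_of_ne_zero (hu : u ≠ 0) (hv : v ≠ 0) :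
    ∀ᶠ t in atTop, 0 < (Cubic.mk a (b + u * t) (c + v * t) d).discr := by
  let f : R[X] := (Cubic.mk (C a) (C b + C u * X) (C c + C v * X) (C d)).discr
  have hdeg : f.natDegree ≤ 4 := by
    simp only [f, Cubic.discr]
    compute_degree
  have hcoeff : f.coeff 4 = u ^ 2 * v ^ 2 := by
    simp only [f, Cubic.discr]
    compute_degree!
  have hpos : 0 < f.coeff 4 := hcoeff ▸ by positivity
  simpa [f, Cubic.discr] using eventually_eval_pos_of_coeff_pos hdeg hpos

theorem eventually_mul_discr_neg (hav : a * v ≠ 0) :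
    ∀ᶠ t in atTop, a * v * (Cubic.mk a b (c + v * t) d).discr < 0 := by
  let f : R[X] := (Cubic.mk (C a) (C b) (C c + C v * X) (C d)).discr
  have hdeg : f.natDegree ≤ 3 := by
    simp only [f, Cubic.discr]
    compute_degree
  have hcoeff : f.coeff 3 = -(4 * a * v ^ 3) := by
    simp only [f, Cubic.discr]
    compute_degree!
  have hpos : 0 < (C (-(a * v)) * f).coeff 3 := by
    have hv : v ≠ 0 := right_ne_zero_of_mul hav
    calc 0 < 4 * (a * v) ^ 2 * v ^ 2 := by positivity
      _ = (C (-(a * v)) * f).coeff 3 := by rw [coeff_C_mul, hcoeff]; ring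
  simpa [f, Cubic.discr] using
    eventually_eval_pos_of_coeff_pos ((natDegree_C_mul_le _ f).trans hdeg) hpos

theorem eventually_discr_nonneg_of_leading_eq_zero (hv : v ≠ 0) :
    ∀ᶠ t in atTop, 0 ≤ (Cubic.mk 0 b (c + v * t) d).discr := by
  have hdeg : ((C c + C v * X) ^ 2 - C (4 * b * d)).natDegree ≤ 2 := by compute_degree
  have hcoeff : ((C c + C v * X) ^ 2 - C (4 * b * d)).coeff 2 = v ^ 2 := by compute_degree!
  filter_upwards [eventually_eval_pos_of_coeff_pos hdeg (hcoeff ▸ by positivity)] with t ht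
  calc 0 ≤ b ^ 2 * ((C c + C v * X) ^ 2 - C (4 * b * d)).eval t := by positivity
    _ = (Cubic.mk 0 b (c + v * t) d).discr := by
      simp only [Cubic.discr, eval_sub, eval_pow, eval_add, eval_mul, eval_C, eval_X]
      ring

theorem eventually_discr_neg_iff_of_ne_zero (hv : v ≠ 0) :
    (∀ᶠ t in atTop, (Cubic.mk a b (c + v * t) d).discr < 0) ↔ 0 < a * v := by
  rcases eq_or_ne a 0 with rfl | ha
  · refine iff_of_false (fun hneg => ?_) (by simp)
    have hnonneg := eventually_discr_nonneg_of_leading_eq_zero b c d hv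
    obtain ⟨t, hlt, hge⟩ := (hneg.and hnonneg).exists
    exact hlt.not_ge hge
  have hprod := eventually_mul_discr_neg a b c d (mul_ne_zero ha hv)
  constructor
  · intro hneg
    obtain ⟨t, hlt, hmul⟩ := (hneg.and hprod).exists
    exact (pos_iff_neg_of_mul_neg hmul).mpr hlt
  · exact fun hav => hprod.mono fun t hmul => (pos_iff_neg_of_mul_neg hmul).mp hav

theorem eventually_discr_neg_iff (huv : u ≠ 0 ∨ v ≠ 0) :
    (∀ᶠ t in atTop, (Cubic.mk a (b + u * t) (c + v * t) d).discr < 0) ↔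
      (u = 0 ∧ 0 < a * v) ∨ (v = 0 ∧ 0 < d * u) := by
  rcases eq_or_ne u 0 with rfl | hu
  · have hv : v ≠ 0 := by simpa using huv
    simpa [hv] using eventually_discr_neg_iff_of_ne_zero a b c d hv
  rcases eq_or_ne v 0 with rfl | hv
  · simpa [hu, cubic_discr_reverse] using eventually_discr_neg_iff_of_ne_zero d c b a hu
  · refine iff_of_false (fun hneg => ?_) (by simp [hu, hv])
    obtain ⟨t, hlt, hgt⟩ := (hneg.and (eventually_discr_pos_of_ne_zero a b c d hu hv)).exists
    exact lt_asymm hlt hgt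

end Asymptotics

theorem asymptotic_directions_of_NRS_domain_general
    (a11 a12 a13 a21 a22 a23 a32 a33 : ℤ) (h21 : a21 ≠ 0) (h32 : a32 ≠ 0)
    (p q : ℤ) (hpq : ¬(p = 0 ∧ q = 0)) :
    (∃ m n : ℤ, ∀ t : ℤ, 0 ≤ t →
        IsNRS (Hmat a11 a12 a13 a21 a22 a23 a32 a33 (m + p * t) (n + q * t))) ↔
      ((q = 0 ∧ a21 * a32 * p < 0) ∨
        (0 < (Hmat a11 a12 a13 a21 a22 a23 a32 a33 0 0).det * a32 * q ∧ a21 * p = a11 * q)) := by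
  have hdir : -(a32 * q) ≠ 0 ∨ a32 * (a11 * q - a21 * p) ≠ 0 := by
    contrapose! hpq
    have hq : q = 0 := by simpa [h32] using hpq.1
    exact ⟨by simpa [h32, h21, hq] using hpq.2, hq⟩
  rw [exists_forall_nonneg_ray_iff (Q := fun m n => IsNRS (Hmat _ _ _ _ _ _ _ _ m n))]
  simp_rw [isNRS_iff_discr_charCubic_neg, charCubic_Hmat_ray,
    eventually_discr_neg_iff _ _ _ _ hdir, exists_const]
  refine or_congr ?_ ?_
  · rw [neg_eq_zero, mul_eq_zero, or_iff_right h32, one_mul, ← neg_lt_zero]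
    refine and_congr_right fun hq => ?_
    rw [hq]
    ring_nf
  · rw [and_comm, mul_eq_zero, or_iff_right h32, sub_eq_zero, eq_comm (a := a11 * q), neg_mul_neg,
      mul_assoc]

/-- The asymptotic directions of the NRS-domain of the family H(m,n) are exactly
the positive multiples of (−1,0) and of (a11,a21). -/
theorem asymptotic_directions_of_NRS_domain
    (a11 a12 a13 a21 a22 a23 a32 a33 : ℤ)
    (hdet : (Hmat a11 a12 a13 a21 a22 a23 a32 a33 0 0).det = 1)
    (h11 : 0 ≤ a11) (h1121 : a11 < a21)
    (h12 : 0 ≤ a12) (h1232 : a12 < a32)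
    (h22 : 0 ≤ a22) (h2232 : a22 < a32)
    (p q : ℤ) (hpq : ¬(p = 0 ∧ q = 0)) :
    (∃ m n : ℤ, ∀ t : ℤ, 0 ≤ t →
        IsNRS (Hmat a11 a12 a13 a21 a22 a23 a32 a33 (m + p * t) (n + q * t))) ↔
      ((q = 0 ∧ p < 0) ∨ (0 < q ∧ a21 * p = a11 * q)) := by
  have h21 : 0 < a21 := h11.trans_lt h1121
  have h32 : 0 < a32 := h12.trans_lt h1232
  simpa [hdet, mul_neg_iff, h21, h32, h21.not_gt, h32.not_gt] using
    asymptotic_directions_of_NRS_domain_general a11 a12 a13 a21 a22 a23 a32 a33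
      h21.ne' h32.ne' p q hpq
end

section
/- Let δ(m,n) = (m² − 4n)·(n² + 4m) − 2mn − 27. For all real numbers m, n with δ(m,n) = 0, one has (m² − 4n + 3)·(n² + 4m + 3) ≥ 0 and (m² − 4n − 3)·(n² + 4m − 3) − 72 ≤ 0. -/
/-!
Write `A = m² - 4n` and `B = n² + 4m`. Shifting both factors by `±3` changes `AB` only by a constant
and a multiple of `A + B = m² + n² + 4(m - n)`, so subtracting `δ = AB - 2mn - 27` from the shifted
product leaves a quadratic polynomial in `m` and `n`. It has no mixed term in the variables `m + n`
and `m - n`, and completing the square in `m - n` shows its sign.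
-/

section Identities

variable {R : Type*} [CommRing R] (m n : R)

theorem mul_add_three_eq_discr_add_sq :
    (m ^ 2 - 4 * n + 3) * (n ^ 2 + 4 * m + 3) =
      ((m ^ 2 - 4 * n) * (n ^ 2 + 4 * m) - 2 * m * n - 27) +
        (2 * (m + n) ^ 2 + (m - n + 6) ^ 2) := by
  ring

theorem mul_sub_three_eq_discr_sub_sq :
    (m ^ 2 - 4 * n - 3) * (n ^ 2 + 4 * m - 3) - 54 =
      ((m ^ 2 - 4 * n) * (n ^ 2 + 4 * m) - 2 * m * n - 27) -
        ((m + n) ^ 2 + 2 * (m - n + 3) ^ 2) := by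
  ring

end Identities

theorem discriminant_curve_between_parabolas_general {R : Type*} [CommRing R] [LinearOrder R]
    [IsOrderedRing R] (m n : R)
    (h : (m ^ 2 - 4 * n) * (n ^ 2 + 4 * m) - 2 * m * n - 27 = 0) :
    (m ^ 2 - 4 * n + 3) * (n ^ 2 + 4 * m + 3) ≥ 0 ∧
    (m ^ 2 - 4 * n - 3) * (n ^ 2 + 4 * m - 3) - 54 ≤ 0 := by
  constructor
  · rw [mul_add_three_eq_discr_add_sq, h, zero_add]
    exact add_nonneg (mul_nonneg zero_le_two (sq_nonneg _)) (sq_nonneg _)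
  · rw [mul_sub_three_eq_discr_sub_sq, h, zero_sub, neg_nonpos]
    exact add_nonneg (sq_nonneg _) (mul_nonneg zero_le_two (sq_nonneg _))

/-- The zero set of δ(m,n) = (m² − 4n)(n² + 4m) − 2mn − 27 lies between the two
shifted pairs of parabolas. -/
theorem discriminant_curve_between_parabolas (m n : ℝ)
    (h : (m ^ 2 - 4 * n) * (n ^ 2 + 4 * m) - 2 * m * n - 27 = 0) :
    (m ^ 2 - 4 * n + 3) * (n ^ 2 + 4 * m + 3) ≥ 0 ∧
    (m ^ 2 - 4 * n - 3) * (n ^ 2 + 4 * m - 3) - 72 ≤ 0 :=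
  (discriminant_curve_between_parabolas_general m n h).imp_right fun h_le => by linarith
end
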